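/- Dispersive estimate on homogeneous trees: let Q ≥ 2 be an integer, let T be a homogeneous tree of degree Q+1, let 0 < α ≤ 2, and let 2 < q ≤ ∞ and 2 < q̃ ≤ ∞. Then there exists a constant C > 0 such that for every t ∈ ℝ and every f ∈ ℓ^{q′}(T) (which lies in ℓ²(T) since q′ ≤ 2): ‖e^{it(−Δ)^{α/2}} f‖_{ℓ^{q̃}(T)} ≤ C·(1 + |t|)^{−3/2}·‖f‖_{ℓ^{q′}(T)}. -/

import Mathlib

open MeasureTheory
open scoped ENNReal

namespace SimpleGraph

variable {V : Type*} {G : SimpleGraph V}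

theorem Connected.exists_adj_dist_add_one (hG : G.Connected) {x y : V} (hxy : x ≠ y) :
    ∃ z, G.Adj x z ∧ G.dist z y + 1 = G.dist x y := by
  obtain ⟨p, hp⟩ := hG.exists_walk_length_eq_dist x y
  cases p with
  | nil => exact absurd rfl hxy
  | cons h p =>
    rename_i z
    refine ⟨z, h, ?_⟩
    have h1 := dist_le p
    have h2 := hG.dist_triangle (u := x) (v := z) (w := y)
    rw [dist_eq_one_iff_adj.2 h] at h2
    rw [Walk.length_cons] at hp
    omega

theorem IsTree.eq_of_dist_add_one (hG : G.IsTree) {x y z₁ z₂ : V} (h₁ : G.Adj x z₁)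
    (h₂ : G.Adj x z₂) (hd₁ : G.dist z₁ y + 1 = G.dist x y) (hd₂ : G.dist z₂ y + 1 = G.dist x y) :
    z₁ = z₂ := by
  obtain ⟨p₁, hp₁⟩ := hG.connected.exists_walk_length_eq_dist y z₁
  obtain ⟨p₂, hp₂⟩ := hG.connected.exists_walk_length_eq_dist y z₂
  have i₁ : (p₁.concat h₁.symm).IsPath := by
    apply Walk.isPath_of_length_eq_dist
    rw [Walk.length_concat, hp₁, dist_comm, hd₁, dist_comm]
  have i₂ : (p₂.concat h₂.symm).IsPath := by
    apply Walk.isPath_of_length_eq_dist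
    rw [Walk.length_concat, hp₂, dist_comm, hd₂, dist_comm]
  have h := congrArg Subtype.val ((hG.isAcyclic.subsingleton_path _ _).elim ⟨_, i₁⟩ ⟨_, i₂⟩)
  have h' := congrArg Walk.penultimate h
  simpa using h'

theorem IsTree.sum_neighborFinset_dist [∀ v, Fintype (G.neighborSet v)] {M : Type*}
    [AddCommMonoid M] (hG : G.IsTree) {Q : ℕ} (hdeg : ∀ v : V, G.degree v = Q + 1) (φ : ℕ → M)
    {x y : V} (hxy : x ≠ y) :
    ∑ z ∈ G.neighborFinset x, φ (G.dist z y) =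
      φ (G.dist x y - 1) + Q • φ (G.dist x y + 1) := by
  classical
  obtain ⟨z, hz, hd⟩ := hG.connected.exists_adj_dist_add_one hxy
  have hmem : z ∈ G.neighborFinset x := by simpa using hz
  rw [← Finset.add_sum_erase _ _ hmem]
  have h1 : ∀ w ∈ (G.neighborFinset x).erase z, φ (G.dist w y) = φ (G.dist x y + 1) := by
    intro w hw
    rw [Finset.mem_erase, mem_neighborFinset] at hw
    rcases hG.dist_eq_dist_add_one_of_adj y hw.2 with h | h
    · rw [dist_comm, dist_comm (u := y)] at h
      exact absurd (hG.eq_of_dist_add_one hw.2 hz h.symm hd) hw.1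
    · rw [dist_comm, dist_comm (u := y)] at h
      rw [h]
  rw [Finset.sum_congr rfl h1, Finset.sum_const, Finset.card_erase_of_mem hmem,
    card_neighborFinset_eq_degree, hdeg, ← hd]
  simp

theorem sum_neighborFinset_dist_self [∀ v, Fintype (G.neighborSet v)] {M : Type*}
    [AddCommMonoid M] {Q : ℕ} (hdeg : ∀ v : V, G.degree v = Q + 1) (φ : ℕ → M) (x : V) :
    ∑ z ∈ G.neighborFinset x, φ (G.dist z x) = (Q + 1) • φ 1 := by
  have h1 : ∀ w ∈ G.neighborFinset x, φ (G.dist w x) = φ 1 := by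
    intro w hw
    rw [mem_neighborFinset] at hw
    rw [dist_eq_one_iff_adj.2 hw.symm]
  rw [Finset.sum_congr rfl h1, Finset.sum_const, card_neighborFinset_eq_degree, hdeg]

end SimpleGraph

namespace SimpleGraph

variable {V : Type*} {G : SimpleGraph V} [∀ v, Fintype (G.neighborSet v)]

theorem IsTree.sum_neighborFinset_inv_sqrt_pow_dist_le (hG : G.IsTree) {Q : ℕ} (hQ : 2 ≤ Q)
    (hdeg : ∀ v : V, G.degree v = Q + 1) (x o : V) :
    ∑ z ∈ G.neighborFinset x, (√(Q : ℝ))⁻¹ ^ G.dist z o ≤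
      2 * √(Q : ℝ) * (√(Q : ℝ))⁻¹ ^ G.dist x o := by
  have hQ' : (2 : ℝ) ≤ Q := by exact_mod_cast hQ
  have hb : 0 < √(Q : ℝ) := Real.sqrt_pos.2 (by linarith)
  have hbb : √(Q : ℝ) ^ 2 = Q := Real.sq_sqrt (by linarith)
  by_cases hxo : x = o
  · subst hxo
    rw [sum_neighborFinset_dist_self hdeg (fun n => (√(Q : ℝ))⁻¹ ^ n)]
    simp only [dist_self, pow_zero, pow_one, nsmul_eq_mul, mul_one, Nat.cast_add, Nat.cast_one]
    rw [mul_inv_le_iff₀ hb]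
    nlinarith
  · rw [hG.sum_neighborFinset_dist hdeg (fun n => (√(Q : ℝ))⁻¹ ^ n) hxo]
    obtain ⟨d, hd⟩ := Nat.exists_eq_add_of_lt (hG.connected.pos_dist_of_ne hxo)
    rw [hd]
    simp only [zero_add, Nat.add_sub_cancel, nsmul_eq_mul, pow_succ]
    apply le_of_eq
    field_simp
    rw [hbb]
    ring

theorem sum_sum_neighborFinset_sq_le {μ : ℝ} {w : V → ℝ}
    (hw : ∀ x, 0 < w x) (hAw : ∀ x, ∑ z ∈ G.neighborFinset x, w z ≤ μ * w x)
    {g : V → ℝ} {c : ℝ} (hgc : ∀ t : Finset V, ∑ y ∈ t, g y ^ 2 ≤ c) (s : Finset V) :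
    ∑ x ∈ s, (∑ y ∈ G.neighborFinset x, g y) ^ 2 ≤ μ ^ 2 * c := by
  classical
  rcases isEmpty_or_nonempty V with hV | ⟨⟨o⟩⟩
  · have hs : s = ∅ := Finset.eq_empty_of_isEmpty s
    have := hgc ∅
    rw [Finset.sum_empty] at this
    simp only [hs, Finset.sum_empty]
    positivity
  have hμ : 0 ≤ μ :=
    nonneg_of_mul_nonneg_left ((Finset.sum_nonneg fun z _ => (hw z).le).trans (hAw o)) (hw o)
  have h1 : ∀ x ∈ s, (∑ y ∈ G.neighborFinset x, g y) ^ 2 ≤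
      ∑ y ∈ G.neighborFinset x, μ * (w x * (g y ^ 2 / w y)) := by
    intro x _
    calc (∑ y ∈ G.neighborFinset x, g y) ^ 2
        ≤ (∑ y ∈ G.neighborFinset x, w y) * ∑ y ∈ G.neighborFinset x, g y ^ 2 / w y := by
          apply Finset.sum_sq_le_sum_mul_sum_of_sq_le_mul
          · exact fun y _ => (hw y).le
          · exact fun y _ => div_nonneg (sq_nonneg _) (hw y).le
          · intro y _
            apply le_of_eq
            field_simp [(hw y).ne']
      _ ≤ (μ * w x) * ∑ y ∈ G.neighborFinset x, g y ^ 2 / w y := by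
          gcongr
          · exact Finset.sum_nonneg fun y _ => div_nonneg (sq_nonneg _) (hw y).le
          · exact hAw x
      _ = _ := by
          rw [Finset.mul_sum]
          exact Finset.sum_congr rfl fun y _ => by ring
  calc _ ≤ ∑ x ∈ s, ∑ y ∈ G.neighborFinset x, μ * (w x * (g y ^ 2 / w y)) := Finset.sum_le_sum h1
    _ = ∑ y ∈ s.biUnion fun x => G.neighborFinset x, ∑ x ∈ s with G.Adj x y,
          μ * (w x * (g y ^ 2 / w y)) := by
        apply Finset.sum_comm'
        intro x y
        simp only [mem_neighborFinset, Finset.mem_filter, Finset.mem_biUnion]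
        grind
    _ ≤ ∑ y ∈ s.biUnion fun x => G.neighborFinset x, ∑ x ∈ G.neighborFinset y,
          μ * (w x * (g y ^ 2 / w y)) := by
        gcongr with y hy
        · intro x _ _
          have := (hw x).le
          have := (hw y).le
          positivity
        · intro x hx
          simp only [Finset.mem_filter] at hx
          simpa using hx.2.symm
    _ ≤ ∑ y ∈ s.biUnion fun x => G.neighborFinset x, μ ^ 2 * g y ^ 2 := by
        gcongr with y hy
        rw [← Finset.mul_sum, ← Finset.sum_mul]
        calc _ ≤ μ * ((μ * w y) * (g y ^ 2 / w y)) := by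
              have := (hw y).le
              gcongr
              exact hAw y
          _ = _ := by
              field_simp [(hw y).ne']
    _ ≤ _ := by
        rw [← Finset.mul_sum]
        gcongr
        exact hgc _

end SimpleGraph

theorem lp.sum_norm_sq_le_norm_sq {V : Type*} (f : lp (fun _ : V => ℂ) 2) (t : Finset V) :
    ∑ y ∈ t, ‖f y‖ ^ 2 ≤ ‖f‖ ^ 2 := by
  have := lp.sum_rpow_le_norm_rpow (p := 2) (by simp) f t
  simpa using this

theorem norm_laplacian_add_one_le {V : Type*} {Q : ℕ} (hQ : 2 ≤ Q)
    {G : SimpleGraph V} [∀ v, Fintype (G.neighborSet v)]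
    (htree : G.IsTree) (hdeg : ∀ v : V, G.degree v = Q + 1)
    (Δ : lp (fun _ : V => ℂ) 2 →L[ℂ] lp (fun _ : V => ℂ) 2)
    (hΔ : ∀ (f : lp (fun _ : V => ℂ) 2) (x : V),
      Δ f x = ((Q : ℂ) + 1)⁻¹ * (∑ y ∈ G.neighborFinset x, f y) - f x) :
    ‖Δ + 1‖ ≤ 2 * √(Q : ℝ) / (Q + 1) := by
  obtain ⟨o⟩ := htree.connected.nonempty
  have hQ' : (2 : ℝ) ≤ Q := by exact_mod_cast hQ
  have hb : 0 < √(Q : ℝ) := Real.sqrt_pos.2 (by linarith)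
  refine ContinuousLinearMap.opNorm_le_bound _ (by positivity) fun f => ?_
  refine lp.norm_le_of_forall_sum_le (p := 2) (by simp) (by positivity) fun s => ?_
  have key := SimpleGraph.sum_sum_neighborFinset_sq_le (G := G) (μ := 2 * √(Q : ℝ))
    (w := fun x => (√(Q : ℝ))⁻¹ ^ G.dist x o) (fun x => by positivity)
    (fun x => htree.sum_neighborFinset_inv_sqrt_pow_dist_le hQ hdeg x o)
    (g := fun y => ‖f y‖) (lp.sum_norm_sq_le_norm_sq f) s
  simp only [ENNReal.toReal_ofNat, Real.rpow_ofNat]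
  calc ∑ x ∈ s, ‖(Δ + 1) f x‖ ^ 2
      ≤ ∑ x ∈ s, ((Q + 1 : ℝ)⁻¹ * ∑ y ∈ G.neighborFinset x, ‖f y‖) ^ 2 := by
        gcongr with x hx
        have h : (Δ + 1) f x = ((Q : ℂ) + 1)⁻¹ * (∑ y ∈ G.neighborFinset x, f y) := by
          have : (Δ + 1) f x = Δ f x + f x := rfl
          rw [this, hΔ]
          ring
        rw [h, norm_mul]
        gcongr
        · rw [norm_inv]
          apply le_of_eq
          congr 1
          simpa using Complex.norm_natCast (Q + 1)
        · exact norm_sum_le _ _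
    _ = ((Q + 1 : ℝ)⁻¹) ^ 2 * ∑ x ∈ s, (∑ y ∈ G.neighborFinset x, ‖f y‖) ^ 2 := by
        rw [Finset.mul_sum]
        exact Finset.sum_congr rfl fun y _ => by ring
    _ ≤ ((Q + 1 : ℝ)⁻¹) ^ 2 * ((2 * √(Q : ℝ)) ^ 2 * ‖f‖ ^ 2) := by gcongr
    _ = _ := by
        field_simp

/-- The boundary factor `(1 - e^{2iθ} / Q)⁻¹` of the spherical functions of a homogeneous tree of
degree `Q + 1`. -/
noncomputable def treeFactor (Q : ℕ) (θ : ℝ) : ℂ :=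
  (1 - (Q : ℂ)⁻¹ * Complex.exp (2 * θ * Complex.I))⁻¹

/-- The angular factor of the spectral density at distance `d`, without its exponential decay. -/
noncomputable def treeWave (Q d : ℕ) (θ : ℝ) : ℝ :=
  (Complex.exp (((d + 1 : ℕ) : ℝ) * θ * Complex.I) * treeFactor Q θ).im

/-- The spectral density (up to the factor `sin θ`) at distance `d` of the Laplacian of a
homogeneous tree of degree `Q + 1`. -/
noncomputable def treeDensity (Q d : ℕ) (θ : ℝ) : ℝ :=
  (√(Q : ℝ))⁻¹ ^ d * treeWave Q d θ

theorem norm_inv_mul_exp {Q : ℕ} (θ : ℝ) :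
    ‖(Q : ℂ)⁻¹ * Complex.exp (2 * θ * Complex.I)‖ = (Q : ℝ)⁻¹ := by
  rw [norm_mul, norm_inv, Complex.norm_natCast]
  have := Complex.norm_exp_ofReal_mul_I (2 * θ)
  push_cast at this
  rw [this, mul_one]

theorem half_le_norm_one_sub_exp {Q : ℕ} (hQ : 2 ≤ Q) (θ : ℝ) :
    1 / 2 ≤ ‖1 - (Q : ℂ)⁻¹ * Complex.exp (2 * θ * Complex.I)‖ := by
  have h := norm_sub_norm_le 1 ((Q : ℂ)⁻¹ * Complex.exp (2 * θ * Complex.I))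
  rw [norm_one, norm_inv_mul_exp] at h
  have hQ' : (2 : ℝ) ≤ Q := by exact_mod_cast hQ
  have : (Q : ℝ)⁻¹ ≤ 2⁻¹ := by gcongr
  linarith

theorem one_sub_exp_ne_zero {Q : ℕ} (hQ : 2 ≤ Q) (θ : ℝ) :
    1 - (Q : ℂ)⁻¹ * Complex.exp (2 * θ * Complex.I) ≠ 0 := by
  have := half_le_norm_one_sub_exp hQ θ
  intro h
  rw [h, norm_zero] at this
  linarith

theorem contDiff_treeFactor {Q : ℕ} (hQ : 2 ≤ Q) {n : ℕ∞} : ContDiff ℝ n (treeFactor Q) := by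
  unfold treeFactor
  have h : ContDiff ℝ n fun θ : ℝ => (θ : ℂ) := Complex.ofRealCLM.contDiff
  apply ContDiff.inv
  · fun_prop
  · exact one_sub_exp_ne_zero hQ

theorem norm_treeFactor_le {Q : ℕ} (hQ : 2 ≤ Q) (θ : ℝ) : ‖treeFactor Q θ‖ ≤ 2 := by
  rw [treeFactor, norm_inv]
  refine inv_le_of_inv_le₀ (by norm_num) ?_
  have := half_le_norm_one_sub_exp hQ θ
  linarith

theorem continuous_treeWave {Q : ℕ} (hQ : 2 ≤ Q) (d : ℕ) : Continuous (treeWave Q d) := by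
  have := (contDiff_treeFactor hQ (n := 0)).continuous
  exact Complex.continuous_im.comp (Continuous.mul (by fun_prop) this)

theorem abs_treeWave_le {Q : ℕ} (hQ : 2 ≤ Q) (d : ℕ) (θ : ℝ) : |treeWave Q d θ| ≤ 2 := by
  refine (Complex.abs_im_le_norm _).trans ?_
  have := Complex.norm_exp_ofReal_mul_I (((d + 1 : ℕ) : ℝ) * θ)
  rw [norm_mul]
  push_cast at this ⊢
  rw [this, one_mul]
  exact norm_treeFactor_le hQ θ

theorem treeWave_zero (Q d : ℕ) : treeWave Q d 0 = 0 := by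
  have : (Complex.exp (((d + 1 : ℕ) : ℝ) * (0 : ℝ) * Complex.I) * treeFactor Q 0) =
      (((1 - (Q : ℝ)⁻¹)⁻¹ : ℝ) : ℂ) := by
    simp [treeFactor]
  rw [treeWave, this, Complex.ofReal_im]

theorem treeWave_pi (Q d : ℕ) : treeWave Q d Real.pi = 0 := by
  have : (Complex.exp (((d + 1 : ℕ) : ℝ) * Real.pi * Complex.I) * treeFactor Q Real.pi) =
      (((-1) ^ (d + 1) * (1 - (Q : ℝ)⁻¹)⁻¹ : ℝ) : ℂ) := by
    rw [treeFactor, Complex.exp_two_pi_mul_I, Complex.ofReal_natCast, mul_assoc, Complex.exp_nat_mul,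
      Complex.exp_pi_mul_I]
    push_cast
    simp
  rw [treeWave, this, Complex.ofReal_im]

theorem treeWave_add_treeWave (Q d : ℕ) (θ : ℝ) :
    treeWave Q d θ + treeWave Q (d + 2) θ = 2 * Real.cos θ * treeWave Q (d + 1) θ := by
  unfold treeWave
  have h : ∀ z : ℂ, 2 * Real.cos θ * z.im = (2 * Complex.cos θ * z).im := by
    intro z
    rw [← Complex.ofReal_cos, ← Complex.ofReal_ofNat, ← Complex.ofReal_mul, Complex.im_ofReal_mul]
  rw [h, ← Complex.add_im, Complex.two_cos]
  congr 1
  have h1 : Complex.exp (((d + 1 + 1 : ℕ) : ℝ) * θ * Complex.I) =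
    Complex.exp (((d + 1 : ℕ) : ℝ) * θ * Complex.I) * Complex.exp (θ * Complex.I) := by
    rw [← Complex.exp_add]; push_cast; ring_nf
  have h2 : Complex.exp (((d + 2 + 1 : ℕ) : ℝ) * θ * Complex.I) =
    Complex.exp (((d + 1 : ℕ) : ℝ) * θ * Complex.I) * Complex.exp (θ * Complex.I) *
      Complex.exp (θ * Complex.I) := by
    rw [← Complex.exp_add, ← Complex.exp_add]; push_cast; ring_nf
  have h3 : Complex.exp (θ * Complex.I) * Complex.exp (-θ * Complex.I) = 1 := by
    rw [← Complex.exp_add]; simp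
  rw [h1, h2]
  linear_combination -Complex.exp (((d + 1 : ℕ) : ℝ) * θ * Complex.I) * treeFactor Q θ * h3

theorem treeWave_sub_treeWave {Q : ℕ} (hQ : 2 ≤ Q) (d : ℕ) (θ : ℝ) :
    treeWave Q d θ - (Q : ℝ)⁻¹ * treeWave Q (d + 2) θ = Real.sin ((d + 1) * θ) := by
  have hs : Real.sin ((d + 1) * θ) = (Complex.exp (((d + 1 : ℕ) : ℝ) * θ * Complex.I)).im := by
    have := Complex.exp_ofReal_mul_I_im (((d + 1 : ℕ) : ℝ) * θ)
    push_cast at this ⊢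
    exact this.symm
  unfold treeWave
  rw [hs, ← Complex.im_ofReal_mul, ← Complex.sub_im]
  congr 1
  have h2 : Complex.exp (((d + 2 + 1 : ℕ) : ℝ) * θ * Complex.I) =
    Complex.exp (((d + 1 : ℕ) : ℝ) * θ * Complex.I) * Complex.exp (2 * θ * Complex.I) := by
    rw [← Complex.exp_add]; push_cast; ring_nf
  have h3 : (1 - (Q : ℂ)⁻¹ * Complex.exp (2 * θ * Complex.I)) * treeFactor Q θ = 1 :=
    mul_inv_cancel₀ (one_sub_exp_ne_zero hQ θ)
  rw [h2]
  push_cast at h3 ⊢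
  linear_combination Complex.exp ((d + 1) * θ * Complex.I) * h3

theorem one_add_inv_mul_treeWave_one {Q : ℕ} (hQ : 2 ≤ Q) (θ : ℝ) :
    (1 + (Q : ℝ)⁻¹) * treeWave Q 1 θ = 2 * Real.cos θ * treeWave Q 0 θ := by
  unfold treeWave
  have h : ∀ z : ℂ, 2 * Real.cos θ * z.im = (2 * Complex.cos θ * z).im := by
    intro z
    rw [← Complex.ofReal_cos, ← Complex.ofReal_ofNat, ← Complex.ofReal_mul, Complex.im_ofReal_mul]
  rw [h, ← Complex.im_ofReal_mul, Complex.two_cos]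
  have h1 : Complex.exp (((1 + 1 : ℕ) : ℝ) * θ * Complex.I) = Complex.exp (2 * θ * Complex.I) := by
    norm_num
  have h2 : Complex.exp (2 * θ * Complex.I) =
    Complex.exp (θ * Complex.I) * Complex.exp (θ * Complex.I) := by
    rw [← Complex.exp_add]; ring_nf
  have h3 : Complex.exp (θ * Complex.I) * Complex.exp (-θ * Complex.I) = 1 := by
    rw [← Complex.exp_add]; simp
  have h4 : (1 - (Q : ℂ)⁻¹ * Complex.exp (2 * θ * Complex.I)) * treeFactor Q θ = 1 :=
    mul_inv_cancel₀ (one_sub_exp_ne_zero hQ θ)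
  have h5 : (((1 + (Q : ℝ)⁻¹ : ℝ) : ℂ) * (Complex.exp (((1 + 1 : ℕ) : ℝ) * θ * Complex.I) *
      treeFactor Q θ)) = (Complex.exp (θ * Complex.I) + Complex.exp (-θ * Complex.I)) *
      (Complex.exp (((0 + 1 : ℕ) : ℝ) * θ * Complex.I) * treeFactor Q θ) - 1 := by
    rw [h1]
    push_cast
    rw [one_mul]
    linear_combination -h4 + treeFactor Q θ * h2 - treeFactor Q θ * h3
  rw [h5, Complex.sub_im, Complex.one_im, sub_zero]

theorem integral_sin_mul_sin_nat (n : ℕ) :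
    ∫ θ in (0 : ℝ)..Real.pi, Real.sin θ * Real.sin ((n + 1) * θ) =
      if n = 0 then Real.pi / 2 else 0 := by
  split_ifs with h
  · subst h
    simp only [CharP.cast_eq_zero, zero_add, one_mul, ← pow_two]
    rw [integral_sin_sq]
    simp
  · have hn : (n : ℝ) ≠ 0 := by exact_mod_cast h
    have hn2 : (n : ℝ) + 2 ≠ 0 := by positivity
    have hder : ∀ θ ∈ Set.uIcc (0 : ℝ) Real.pi, HasDerivAt
        (fun θ : ℝ => Real.sin (n * θ) / (2 * n) - Real.sin ((n + 2) * θ) / (2 * (n + 2)))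
        (Real.sin θ * Real.sin ((n + 1) * θ)) θ := by
      intro θ _
      have h1 := ((hasDerivAt_id θ).const_mul (n : ℝ)).sin.div_const (2 * (n : ℝ))
      have h2 := ((hasDerivAt_id θ).const_mul ((n : ℝ) + 2)).sin.div_const (2 * ((n : ℝ) + 2))
      refine (h1.sub h2).congr_deriv ?_
      simp only [id, mul_one]
      have e1 : (n : ℝ) * θ = (n + 1) * θ - θ := by ring
      have e2 : ((n : ℝ) + 2) * θ = (n + 1) * θ + θ := by ring
      rw [e1, e2, Real.cos_sub, Real.cos_add]
      field_simp
      ring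
    rw [intervalIntegral.integral_eq_sub_of_hasDerivAt hder
      (Continuous.intervalIntegrable (by fun_prop) _ _)]
    have e3 : Real.sin ((n + 2) * Real.pi) = 0 := by
      simpa using Real.sin_nat_mul_pi (n + 2)
    simp [e3]

theorem integral_sin_mul_treeWave {Q : ℕ} (hQ : 2 ≤ Q) (d : ℕ) :
    ∫ θ in (0 : ℝ)..Real.pi, Real.sin θ * treeWave Q d θ =
      if d = 0 then Real.pi / 2 else 0 := by
  have hQ' : (2 : ℝ) ≤ Q := by exact_mod_cast hQ
  set J : ℕ → ℝ := fun d => ∫ θ in (0 : ℝ)..Real.pi, Real.sin θ * treeWave Q d θ with hJ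
  have hint : ∀ d, IntervalIntegrable (fun θ => Real.sin θ * treeWave Q d θ) volume 0 Real.pi :=
    fun d => (Real.continuous_sin.mul (continuous_treeWave hQ d)).intervalIntegrable _ _
  have hrec : ∀ d, J d = (Q : ℝ)⁻¹ * J (d + 2) + if d = 0 then Real.pi / 2 else 0 := by
    intro d
    rw [← integral_sin_mul_sin_nat, hJ]
    rw [← intervalIntegral.integral_const_mul, ← intervalIntegral.integral_add]
    · refine intervalIntegral.integral_congr fun θ _ => ?_
      rw [← treeWave_sub_treeWave hQ]
      ring
    · exact (hint _).const_mul _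
    · exact Continuous.intervalIntegrable (by fun_prop) _ _
  have hbd : ∀ d, |J d| ≤ 2 * Real.pi := by
    intro d
    have := intervalIntegral.norm_integral_le_of_norm_le_const (a := 0) (b := Real.pi) (C := 2)
      (f := fun θ => Real.sin θ * treeWave Q d θ) (fun θ _ => by
        rw [norm_mul]
        have h1 := abs_treeWave_le hQ d θ
        have h2 := Real.abs_sin_le_one θ
        calc _ ≤ 1 * 2 := mul_le_mul h2 h1 (abs_nonneg _) zero_le_one
          _ = 2 := one_mul 2)
    rwa [sub_zero, abs_of_pos Real.pi_pos] at this
  have hpos : ∀ d, 0 < d → J d = 0 := by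
    have hpow : ∀ k d, 0 < d → J d = ((Q : ℝ)⁻¹) ^ k * J (d + 2 * k) := by
      intro k
      induction k with
      | zero => simp
      | succ k ih =>
        intro d hd
        rw [ih d hd, hrec (d + 2 * k), if_neg (by omega)]
        ring_nf
    intro d hd
    have hlim : Filter.Tendsto (fun k : ℕ => ((Q : ℝ)⁻¹) ^ k * (2 * Real.pi)) Filter.atTop
        (nhds 0) := by
      have h1 : (Q : ℝ)⁻¹ < 1 := inv_lt_one_of_one_lt₀ (by linarith)
      simpa using (tendsto_pow_atTop_nhds_zero_of_lt_one (by positivity) h1).mul_const (2 * Real.pi)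
    have hle : |J d| ≤ 0 := by
      refine ge_of_tendsto' hlim fun k => ?_
      rw [hpow k d hd, abs_mul, abs_of_nonneg (by positivity)]
      gcongr
      exact hbd _
    exact abs_nonpos_iff.1 hle
  split_ifs with h
  · subst h
    have := hrec 0
    rw [hpos (0 + 2) (by norm_num), if_pos rfl, mul_zero, zero_add] at this
    exact this
  · exact hpos d (Nat.pos_of_ne_zero h)

/-- The spectral parametrisation `θ ↦ 1 - γ₀ cos θ`, `γ₀ = 2√Q / (Q + 1)`, of the spectrum of
the positive Laplacian of a homogeneous tree of degree `Q + 1`. -/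
noncomputable def treeSpectral (Q : ℕ) (θ : ℝ) : ℝ := 1 - 2 * √(Q : ℝ) / (Q + 1) * Real.cos θ

/-- The value at distance `d` of the convolution kernel of the multiplier `F` of the positive
Laplacian of a homogeneous tree of degree `Q + 1`. -/
noncomputable def treeKernel (Q : ℕ) (F : ℂ → ℂ) (d : ℕ) : ℂ :=
  (2 / Real.pi : ℝ) *
    ∫ θ in (0 : ℝ)..Real.pi, F (treeSpectral Q θ) * ((Real.sin θ * treeDensity Q d θ : ℝ) : ℂ)

theorem continuous_treeSpectral (Q : ℕ) : Continuous (treeSpectral Q) := by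
  unfold treeSpectral
  fun_prop

theorem treeSpectral_mem (Q : ℕ) (θ : ℝ) : treeSpectral Q θ ∈
    Set.Icc (1 - 2 * √(Q : ℝ) / (Q + 1)) (1 + 2 * √(Q : ℝ) / (Q + 1)) := by
  have h1 := Real.neg_one_le_cos θ
  have h2 := Real.cos_le_one θ
  have h3 : 0 ≤ 2 * √(Q : ℝ) / (Q + 1) := by positivity
  constructor <;> unfold treeSpectral <;> nlinarith

theorem two_mul_sqrt_div_lt_one {Q : ℕ} (hQ : 2 ≤ Q) : 2 * √(Q : ℝ) / (Q + 1) < 1 := by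
  have hQ' : (2 : ℝ) ≤ Q := by exact_mod_cast hQ
  have hbb : √(Q : ℝ) ^ 2 = Q := Real.sq_sqrt (by linarith)
  have h1 : (1 : ℝ) < √(Q : ℝ) := Real.lt_sqrt_of_sq_lt (by linarith)
  rw [div_lt_one (by positivity)]
  nlinarith [sq_pos_of_pos (sub_pos.2 h1)]

theorem continuous_treeDensity {Q : ℕ} (hQ : 2 ≤ Q) (d : ℕ) : Continuous (treeDensity Q d) :=
  (continuous_treeWave hQ d).const_mul _

theorem abs_treeDensity_le {Q : ℕ} (hQ : 2 ≤ Q) (d : ℕ) (θ : ℝ) :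
    |treeDensity Q d θ| ≤ 2 * (√(Q : ℝ))⁻¹ ^ d := by
  rw [treeDensity, abs_mul, abs_of_nonneg (by positivity), mul_comm]
  gcongr
  exact abs_treeWave_le hQ d θ

theorem integral_sin_mul_treeDensity {Q : ℕ} (hQ : 2 ≤ Q) (d : ℕ) :
    ∫ θ in (0 : ℝ)..Real.pi, Real.sin θ * treeDensity Q d θ =
      if d = 0 then Real.pi / 2 else 0 := by
  simp only [treeDensity, mul_left_comm (Real.sin _)]
  rw [intervalIntegral.integral_const_mul, integral_sin_mul_treeWave hQ]
  split_ifs with h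
  · simp [h]
  · simp

theorem treeDensity_add_mul_treeDensity {Q : ℕ} (hQ : 2 ≤ Q) (d : ℕ) (θ : ℝ) :
    treeDensity Q d θ + Q * treeDensity Q (d + 2) θ =
      2 * √(Q : ℝ) * Real.cos θ * treeDensity Q (d + 1) θ := by
  have hQ' : (2 : ℝ) ≤ Q := by exact_mod_cast hQ
  have hb : 0 < √(Q : ℝ) := Real.sqrt_pos.2 (by linarith)
  have hbb : √(Q : ℝ) ^ 2 = Q := Real.sq_sqrt (by linarith)
  have h := treeWave_add_treeWave Q d θ
  simp only [treeDensity, pow_succ]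
  field_simp
  rw [hbb]
  field_simp
  linear_combination h

theorem treeDensity_one {Q : ℕ} (hQ : 2 ≤ Q) (θ : ℝ) :
    (Q + 1) * treeDensity Q 1 θ = 2 * √(Q : ℝ) * Real.cos θ * treeDensity Q 0 θ := by
  have hQ' : (2 : ℝ) ≤ Q := by exact_mod_cast hQ
  have hb : 0 < √(Q : ℝ) := Real.sqrt_pos.2 (by linarith)
  have hbb : √(Q : ℝ) ^ 2 = Q := Real.sq_sqrt (by linarith)
  have h := one_add_inv_mul_treeWave_one hQ θ
  simp only [treeDensity, pow_one, pow_zero, one_mul]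
  have hQ0 : (Q : ℝ) ≠ 0 := by positivity
  field_simp at h ⊢
  rw [hbb]
  linear_combination h

section

variable {V : Type*} {G : SimpleGraph V} [∀ v, Fintype (G.neighborSet v)]

theorem SimpleGraph.IsTree.sum_neighborFinset_treeDensity (hG : G.IsTree) {Q : ℕ} (hQ : 2 ≤ Q)
    (hdeg : ∀ v : V, G.degree v = Q + 1) (x y : V) (θ : ℝ) :
    ∑ z ∈ G.neighborFinset x, treeDensity Q (G.dist z y) θ =
      2 * √(Q : ℝ) * Real.cos θ * treeDensity Q (G.dist x y) θ := by
  by_cases hxy : x = y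
  · subst hxy
    rw [sum_neighborFinset_dist_self hdeg (fun n => treeDensity Q n θ), dist_self,
      ← treeDensity_one hQ]
    simp
  · rw [hG.sum_neighborFinset_dist hdeg (fun n => treeDensity Q n θ) hxy]
    obtain ⟨d, hd⟩ := Nat.exists_eq_add_of_lt (hG.connected.pos_dist_of_ne hxy)
    rw [hd, zero_add, ← treeDensity_add_mul_treeDensity hQ]
    simp

theorem intervalIntegrable_treeKernel {Q : ℕ} (hQ : 2 ≤ Q) {F : ℂ → ℂ}
    (hF : ContinuousOn (fun s : ℝ => F s)
      (Set.Icc (1 - 2 * √(Q : ℝ) / (Q + 1)) (1 + 2 * √(Q : ℝ) / (Q + 1)))) (d : ℕ) :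
    IntervalIntegrable
      (fun θ => F (treeSpectral Q θ) * ((Real.sin θ * treeDensity Q d θ : ℝ) : ℂ))
      volume 0 Real.pi := by
  have h1 : Continuous fun θ => F (treeSpectral Q θ) :=
    hF.comp_continuous (continuous_treeSpectral Q) (treeSpectral_mem Q)
  have h2 : Continuous fun θ => Real.sin θ * treeDensity Q d θ :=
    Real.continuous_sin.mul (continuous_treeDensity hQ d)
  exact (h1.mul (Complex.continuous_ofReal.comp h2)).intervalIntegrable _ _

theorem norm_treeKernel_le {Q : ℕ} (hQ : 2 ≤ Q) {F : ℂ → ℂ} {c : ℝ}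
    (hc : ∀ θ, ‖F (treeSpectral Q θ)‖ ≤ c) (d : ℕ) :
    ‖treeKernel Q F d‖ ≤ 4 * c * (√(Q : ℝ))⁻¹ ^ d := by
  have hc0 : 0 ≤ c := (norm_nonneg _).trans (hc 0)
  have := intervalIntegral.norm_integral_le_of_norm_le_const (a := 0) (b := Real.pi)
      (C := c * (1 * (2 * (√(Q : ℝ))⁻¹ ^ d)))
      (f := fun θ => F (treeSpectral Q θ) * ((Real.sin θ * treeDensity Q d θ : ℝ) : ℂ))
      (fun θ _ => by
        rw [norm_mul, Complex.norm_real, norm_mul]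
        gcongr
        · exact hc θ
        · exact Real.abs_sin_le_one θ
        · exact abs_treeDensity_le hQ d θ)
  rw [sub_zero, abs_of_pos Real.pi_pos] at this
  have hpi := Real.pi_pos
  rw [treeKernel, norm_mul, Complex.norm_real, Real.norm_of_nonneg (by positivity)]
  calc _ ≤ 2 / Real.pi * (c * (1 * (2 * (√(Q : ℝ))⁻¹ ^ d)) * Real.pi) := by gcongr
    _ = _ := by field_simp; ring

theorem treeKernel_sub {Q : ℕ} (hQ : 2 ≤ Q) {F₁ F₂ : ℂ → ℂ}
    (hF₁ : ContinuousOn (fun s : ℝ => F₁ s)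
      (Set.Icc (1 - 2 * √(Q : ℝ) / (Q + 1)) (1 + 2 * √(Q : ℝ) / (Q + 1))))
    (hF₂ : ContinuousOn (fun s : ℝ => F₂ s)
      (Set.Icc (1 - 2 * √(Q : ℝ) / (Q + 1)) (1 + 2 * √(Q : ℝ) / (Q + 1)))) (d : ℕ) :
    treeKernel Q (fun z => F₁ z - F₂ z) d = treeKernel Q F₁ d - treeKernel Q F₂ d := by
  rw [treeKernel, treeKernel, treeKernel, ← mul_sub, ← intervalIntegral.integral_sub
    (intervalIntegrable_treeKernel hQ hF₁ d) (intervalIntegrable_treeKernel hQ hF₂ d)]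
  simp only [sub_mul]

theorem treeKernel_add {Q : ℕ} (hQ : 2 ≤ Q) {F₁ F₂ : ℂ → ℂ}
    (hF₁ : ContinuousOn (fun s : ℝ => F₁ s)
      (Set.Icc (1 - 2 * √(Q : ℝ) / (Q + 1)) (1 + 2 * √(Q : ℝ) / (Q + 1))))
    (hF₂ : ContinuousOn (fun s : ℝ => F₂ s)
      (Set.Icc (1 - 2 * √(Q : ℝ) / (Q + 1)) (1 + 2 * √(Q : ℝ) / (Q + 1)))) (d : ℕ) :
    treeKernel Q (fun z => F₁ z + F₂ z) d = treeKernel Q F₁ d + treeKernel Q F₂ d := by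
  rw [treeKernel, treeKernel, treeKernel, ← mul_add, ← intervalIntegral.integral_add
    (intervalIntegrable_treeKernel hQ hF₁ d) (intervalIntegrable_treeKernel hQ hF₂ d)]
  simp only [add_mul]

theorem treeKernel_const_mul (Q : ℕ) (F : ℂ → ℂ) (a : ℂ) (d : ℕ) :
    treeKernel Q (fun z => a * F z) d = a * treeKernel Q F d := by
  simp only [treeKernel, mul_assoc]
  rw [intervalIntegral.integral_const_mul]
  ring

theorem treeKernel_one {Q : ℕ} (hQ : 2 ≤ Q) (d : ℕ) :
    treeKernel Q (fun _ => 1) d = if d = 0 then 1 else 0 := by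
  simp only [treeKernel, one_mul]
  rw [intervalIntegral.integral_ofReal, integral_sin_mul_treeDensity hQ]
  have := Real.pi_ne_zero
  split_ifs
  · rw [← Complex.ofReal_mul]
    norm_cast
    field_simp
  · simp

theorem exists_polynomial_near_of_continuousOn_complex {a b : ℝ} {f : ℝ → ℂ}
    (hf : ContinuousOn f (Set.Icc a b)) {ε : ℝ} (hε : 0 < ε) :
    ∃ p : Polynomial ℂ, ∀ s ∈ Set.Icc a b, ‖p.eval (s : ℂ) - f s‖ < ε := by
  obtain ⟨p, hp⟩ := exists_polynomial_near_of_continuousOn a b (fun s => (f s).re)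
    (Complex.continuous_re.comp_continuousOn hf) (ε / 2) (half_pos hε)
  obtain ⟨q, hq⟩ := exists_polynomial_near_of_continuousOn a b (fun s => (f s).im)
    (Complex.continuous_im.comp_continuousOn hf) (ε / 2) (half_pos hε)
  refine ⟨p.map Complex.ofRealHom + Polynomial.C Complex.I * q.map Complex.ofRealHom,
    fun s hs => ?_⟩
  have h1 : ∀ r : Polynomial ℝ,
      (r.map Complex.ofRealHom).eval (s : ℂ) = ((r.eval s : ℝ) : ℂ) := by
    intro r
    exact Polynomial.eval_map_apply Complex.ofRealHom s
  rw [Polynomial.eval_add, Polynomial.eval_mul, Polynomial.eval_C, h1, h1]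
  have h2 : ((p.eval s : ℝ) : ℂ) + Complex.I * ((q.eval s : ℝ) : ℂ) - f s =
      ((p.eval s - (f s).re : ℝ) : ℂ) + Complex.I * ((q.eval s - (f s).im : ℝ) : ℂ) := by
    apply Complex.ext <;> simp
  rw [h2]
  calc _ ≤ _ := norm_add_le _ _
    _ = |p.eval s - (f s).re| + |q.eval s - (f s).im| := by
      rw [norm_mul, Complex.norm_I, one_mul, Complex.norm_real, Complex.norm_real,
        Real.norm_eq_abs, Real.norm_eq_abs]
    _ < ε / 2 + ε / 2 := add_lt_add (hp s hs) (hq s hs)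
    _ = ε := add_halves ε

section

variable (L : lp (fun _ : V => ℂ) 2 →L[ℂ] lp (fun _ : V => ℂ) 2)

theorem pow_apply_single_eq_treeKernel [DecidableEq V] (hG : G.IsTree) {Q : ℕ} (hQ : 2 ≤ Q)
    (hdeg : ∀ v : V, G.degree v = Q + 1)
    (hL : ∀ (f : lp (fun _ : V => ℂ) 2) (x : V),
      L f x = f x - ((Q : ℂ) + 1)⁻¹ * (∑ y ∈ G.neighborFinset x, f y)) (n : ℕ) (x y : V) :
    (L ^ n) (lp.single 2 y 1) x = treeKernel Q (fun z => z ^ n) (G.dist x y) := by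
  induction n generalizing x with
  | zero =>
    simp only [pow_zero, treeKernel_one hQ, hG.connected.dist_eq_zero_iff]
    rw [one_apply_eq_self, lp.single_apply, Pi.single_apply]
  | succ n ih =>
    have hcont : ContinuousOn (fun s : ℝ => (s : ℂ) ^ n)
      (Set.Icc (1 - 2 * √(Q : ℝ) / (Q + 1)) (1 + 2 * √(Q : ℝ) / (Q + 1))) := by fun_prop
    rw [pow_succ', mul_apply_eq_comp, hL]
    simp only [ih]
    simp only [treeKernel]
    have hint := intervalIntegrable_treeKernel hQ (F := fun z => z ^ n) hcont
    rw [← Finset.mul_sum, ← intervalIntegral.integral_finsetSum (fun z _ => hint _),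
      mul_left_comm, ← mul_sub, ← intervalIntegral.integral_const_mul ((Q : ℂ) + 1)⁻¹,
      ← intervalIntegral.integral_sub (hint _)]
    · congr 1
      refine intervalIntegral.integral_congr fun θ _ => ?_
      rw [← Finset.mul_sum, ← Complex.ofReal_sum, ← Finset.mul_sum,
        hG.sum_neighborFinset_treeDensity hQ hdeg, pow_succ, treeSpectral]
      push_cast
      have : (Q : ℂ) + 1 ≠ 0 := by exact_mod_cast (Nat.succ_ne_zero Q)
      field_simp
    · refine IntervalIntegrable.const_mul ?_ _
      simpa only [Finset.sum_fn] using
        IntervalIntegrable.sum (G.neighborFinset x) fun z _ => hint (G.dist z y)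

theorem aeval_apply_single_eq_treeKernel [DecidableEq V] (hG : G.IsTree) {Q : ℕ} (hQ : 2 ≤ Q)
    (hdeg : ∀ v : V, G.degree v = Q + 1)
    (hL : ∀ (f : lp (fun _ : V => ℂ) 2) (x : V),
      L f x = f x - ((Q : ℂ) + 1)⁻¹ * (∑ y ∈ G.neighborFinset x, f y))
    (p : Polynomial ℂ) (x y : V) :
    (Polynomial.aeval L p) (lp.single 2 y 1) x =
      treeKernel Q (fun z => p.eval z) (G.dist x y) := by
  induction p using Polynomial.induction_on' with
  | add p q hp hq =>
    simp only [map_add, Polynomial.eval_add]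
    rw [treeKernel_add hQ (by fun_prop) (by fun_prop), ← hp, ← hq]
    rfl
  | monomial n a =>
    simp only [Polynomial.eval_monomial]
    rw [treeKernel_const_mul, ← pow_apply_single_eq_treeKernel L hG hQ hdeg hL,
      Polynomial.aeval_monomial, Algebra.algebraMap_eq_smul_one, smul_mul_assoc, one_mul]
    rfl

open scoped Pointwise in
theorem spectrum_positive_laplacian {Q : ℕ} (hQ : 2 ≤ Q) (hG : G.IsTree)
    (hdeg : ∀ v : V, G.degree v = Q + 1)
    (hL : ∀ (f : lp (fun _ : V => ℂ) 2) (x : V),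
      L f x = f x - ((Q : ℂ) + 1)⁻¹ * (∑ y ∈ G.neighborFinset x, f y))
    (hsa : IsSelfAdjoint L) {z : ℂ} (hz : z ∈ spectrum ℂ L) :
    ∃ s ∈ Set.Icc (1 - 2 * √(Q : ℝ) / (Q + 1)) (1 + 2 * √(Q : ℝ) / (Q + 1)), z = (s : ℝ) := by
  have hre := hsa.mem_spectrum_eq_re hz
  refine ⟨z.re, ?_, hre⟩
  have hnorm : ‖-L + 1‖ ≤ 2 * √(Q : ℝ) / (Q + 1) := by
    refine norm_laplacian_add_one_le hQ hG hdeg (-L) fun f x => ?_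
    change -(L f x) = _
    rw [hL]
    ring
  obtain ⟨o⟩ := hG.connected.nonempty
  have : Nontrivial (lp (fun _ : V => ℂ) 2) := by
    classical
    refine ⟨lp.single 2 o 1, 0, fun h => ?_⟩
    have := congrArg (fun f : lp (fun _ : V => ℂ) 2 => f o) h
    simp at this
  have hmem : 1 - z ∈ spectrum ℂ (-L + 1) := by
    have h : 1 - z ∈ ({1} : Set ℂ) - spectrum ℂ L := Set.sub_mem_sub (Set.mem_singleton 1) hz
    rwa [spectrum.singleton_sub_eq, map_one, sub_eq_neg_add] at h
  have hle := (spectrum.norm_le_norm_of_mem hmem).trans hnorm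
  have hab : |1 - z.re| ≤ 2 * √(Q : ℝ) / (Q + 1) := by
    have := Complex.abs_re_le_norm (1 - z)
    simp only [Complex.sub_re, Complex.one_re] at this
    exact this.trans hle
  rw [abs_le] at hab
  constructor <;> linarith

theorem cfc_apply_single_eq_treeKernel [DecidableEq V] {Q : ℕ} (hQ : 2 ≤ Q) (hG : G.IsTree)
    (hdeg : ∀ v : V, G.degree v = Q + 1)
    (hL : ∀ (f : lp (fun _ : V => ℂ) 2) (x : V),
      L f x = f x - ((Q : ℂ) + 1)⁻¹ * (∑ y ∈ G.neighborFinset x, f y))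
    (hsa : IsSelfAdjoint L) {F : ℂ → ℂ}
    (hF : ContinuousOn (fun s : ℝ => F s)
      (Set.Icc (1 - 2 * √(Q : ℝ) / (Q + 1)) (1 + 2 * √(Q : ℝ) / (Q + 1)))) (x y : V) :
    cfc F L (lp.single 2 y 1) x = treeKernel Q F (G.dist x y) := by
  have hspec := fun z => spectrum_positive_laplacian L hQ hG hdeg hL hsa (z := z)
  have hF' : ContinuousOn F (spectrum ℂ L) := by
    have h1 : ContinuousOn (fun z : ℂ => F (z.re : ℝ)) (spectrum ℂ L) := by
      refine hF.comp Complex.continuous_re.continuousOn fun z hz => ?_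
      obtain ⟨s, hs, rfl⟩ := hspec z hz
      simpa using hs
    refine h1.congr fun z hz => ?_
    obtain ⟨s, hs, rfl⟩ := hspec z hz
    simp
  rw [← sub_eq_zero, ← norm_le_zero_iff]
  refine le_of_forall_pos_le_add fun ε hε => ?_
  obtain ⟨p, hp⟩ := exists_polynomial_near_of_continuousOn_complex hF
    (ε := ε / 5) (by positivity)
  have hpc : Continuous fun z : ℂ => p.eval z := p.continuous
  have h1 : ‖cfc F L (lp.single 2 y 1) x - (Polynomial.aeval L p) (lp.single 2 y 1) x‖ ≤
      ε / 5 := by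
    have hop : ‖cfc F L - Polynomial.aeval L p‖ ≤ ε / 5 := by
      have hn : IsStarNormal L := hsa.isStarNormal
      rw [← cfc_polynomial p L hn, ← cfc_sub F (fun z => p.eval z) L hF' hpc.continuousOn]
      refine norm_cfc_le (by positivity) fun z hz => ?_
      obtain ⟨s, hs, rfl⟩ := hspec z hz
      rw [norm_sub_rev]
      exact (hp s hs).le
    calc _ ≤ ‖(cfc F L - Polynomial.aeval L p) (lp.single 2 y 1)‖ :=
          lp.norm_apply_le_norm (by simp) _ x
      _ ≤ ‖cfc F L - Polynomial.aeval L p‖ * ‖lp.single (E := fun _ : V => ℂ) 2 y 1‖ :=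
          ContinuousLinearMap.le_opNorm _ _
      _ = ‖cfc F L - Polynomial.aeval L p‖ := by rw [lp.norm_single (by simp)]; simp
      _ ≤ _ := hop
  have h2 : ‖treeKernel Q (fun z => p.eval z) (G.dist x y) - treeKernel Q F (G.dist x y)‖ ≤
      4 * (ε / 5) := by
    rw [← treeKernel_sub hQ (by fun_prop) hF]
    refine (norm_treeKernel_le hQ (fun θ => (hp _ (treeSpectral_mem Q θ)).le) _).trans ?_
    refine mul_le_of_le_one_right (by positivity) (pow_le_one₀ (by positivity) ?_)
    refine inv_le_one_of_one_le₀ (Real.one_le_sqrt.2 ?_)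
    exact_mod_cast (by omega : 1 ≤ Q)
  rw [aeval_apply_single_eq_treeKernel L hG hQ hdeg hL] at h1
  calc _ ≤ _ := norm_sub_le_norm_sub_add_norm_sub _ (treeKernel Q (fun z => p.eval z) (G.dist x y)) _
    _ ≤ 0 + ε := by linarith

end

end

theorem lp.hasSum_apply_single {V : Type*} [DecidableEq V]
    (A : lp (fun _ : V => ℂ) 2 →L[ℂ] lp (fun _ : V => ℂ) 2) (f : lp (fun _ : V => ℂ) 2) (x : V) :
    HasSum (fun y => f y * A (lp.single 2 y 1) x) (A f x) := by
  have h := ((lp.hasSum_single (by simp) f).mapL A).mapL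
    (lp.evalCLM ℂ (fun _ : V => ℂ) (p := 2) x)
  have h1 : ∀ y, lp.single (E := fun _ : V => ℂ) 2 y (f y) = f y • lp.single 2 y 1 := by
    intro y
    rw [← lp.single_smul, smul_eq_mul, mul_one]
  simp only [h1, map_smul] at h
  exact h

/-- Up to a constant, the resolvent kernel of the adjacency operator of a homogeneous tree. -/
noncomputable def treeResolvent (Q : ℕ) (l : ℝ) (d : ℕ) : ℝ :=
  2 / Real.pi * ∫ θ in (0 : ℝ)..Real.pi,
    (l - 2 * √(Q : ℝ) * Real.cos θ)⁻¹ * (Real.sin θ * treeDensity Q d θ)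

theorem sub_two_mul_sqrt_mul_cos_pos {Q : ℕ} {l : ℝ} (hl : 2 * √(Q : ℝ) < l) (θ : ℝ) :
    0 < l - 2 * √(Q : ℝ) * Real.cos θ := by
  have h2 := Real.cos_le_one θ
  have h3 : 0 ≤ 2 * √(Q : ℝ) := by positivity
  nlinarith

theorem treeKernel_inv (Q : ℕ) (l : ℝ) (d : ℕ) :
    treeKernel Q (fun z => (l - (Q + 1) * (1 - z))⁻¹) d = treeResolvent Q l d := by
  rw [treeKernel, treeResolvent, Complex.ofReal_mul, ← intervalIntegral.integral_ofReal]
  congr 1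
  refine intervalIntegral.integral_congr fun θ _ => ?_
  have : (Q : ℂ) + 1 ≠ 0 := by exact_mod_cast (Nat.succ_ne_zero Q)
  have h : (l : ℂ) - (Q + 1) * (1 - treeSpectral Q θ) =
      ((l - 2 * √(Q : ℝ) * Real.cos θ : ℝ) : ℂ) := by
    rw [treeSpectral]
    push_cast
    field_simp
    ring
  rw [h]
  push_cast
  ring

theorem continuous_inv_sub_cos_mul {Q : ℕ} (hQ : 2 ≤ Q) {l : ℝ} (hl : 2 * √(Q : ℝ) < l) (d : ℕ) :
    Continuous fun θ => (l - 2 * √(Q : ℝ) * Real.cos θ)⁻¹ * (Real.sin θ * treeDensity Q d θ) := by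
  refine Continuous.mul (Continuous.inv₀ (by fun_prop) fun θ => ?_)
    (Real.continuous_sin.mul (continuous_treeDensity hQ d))
  exact (sub_two_mul_sqrt_mul_cos_pos hl θ).ne'

theorem mul_treeResolvent_zero {Q : ℕ} (hQ : 2 ≤ Q) {l : ℝ} (hl : 2 * √(Q : ℝ) < l) :
    l * treeResolvent Q l 0 = 1 + (Q + 1) * treeResolvent Q l 1 := by
  have hc := fun d => (continuous_inv_sub_cos_mul hQ hl d).intervalIntegrable (μ := volume)
    0 Real.pi
  have h0 := integral_sin_mul_treeDensity hQ 0
  have h1 : ∫ θ in (0 : ℝ)..Real.pi, Real.sin θ * treeDensity Q 0 θ = l * (∫ θ in (0 : ℝ)..Real.pi,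
      (l - 2 * √(Q : ℝ) * Real.cos θ)⁻¹ * (Real.sin θ * treeDensity Q 0 θ)) -
      (Q + 1) * (∫ θ in (0 : ℝ)..Real.pi,
      (l - 2 * √(Q : ℝ) * Real.cos θ)⁻¹ * (Real.sin θ * treeDensity Q 1 θ)) := by
    rw [← intervalIntegral.integral_const_mul, ← intervalIntegral.integral_const_mul,
      ← intervalIntegral.integral_sub ((hc 0).const_mul _) ((hc 1).const_mul _)]
    refine intervalIntegral.integral_congr fun θ _ => ?_
    have h2 := sub_two_mul_sqrt_mul_cos_pos hl θ
    have h3 := treeDensity_one hQ θ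
    field_simp
    linear_combination Real.sin θ * h3
  have hpi := Real.pi_pos
  rw [h0, if_pos rfl] at h1
  simp only [treeResolvent]
  have h2 : 2 / Real.pi * (Real.pi / 2) = 1 := by field_simp
  linear_combination -(2 / Real.pi) * h1 + h2

theorem mul_treeResolvent_succ {Q : ℕ} (hQ : 2 ≤ Q) {l : ℝ} (hl : 2 * √(Q : ℝ) < l) (d : ℕ) :
    l * treeResolvent Q l (d + 1) = treeResolvent Q l d + Q * treeResolvent Q l (d + 2) := by
  have hc := fun d => (continuous_inv_sub_cos_mul hQ hl d).intervalIntegrable (μ := volume)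
    0 Real.pi
  have h0 := integral_sin_mul_treeDensity hQ (d + 1)
  have h1 : ∫ θ in (0 : ℝ)..Real.pi, Real.sin θ * treeDensity Q (d + 1) θ =
      l * (∫ θ in (0 : ℝ)..Real.pi,
      (l - 2 * √(Q : ℝ) * Real.cos θ)⁻¹ * (Real.sin θ * treeDensity Q (d + 1) θ)) -
      (∫ θ in (0 : ℝ)..Real.pi,
      (l - 2 * √(Q : ℝ) * Real.cos θ)⁻¹ * (Real.sin θ * treeDensity Q d θ)) -
      Q * (∫ θ in (0 : ℝ)..Real.pi,
      (l - 2 * √(Q : ℝ) * Real.cos θ)⁻¹ * (Real.sin θ * treeDensity Q (d + 2) θ)) := by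
    rw [← intervalIntegral.integral_const_mul, ← intervalIntegral.integral_const_mul,
      ← intervalIntegral.integral_sub ((hc _).const_mul _) (hc _),
      ← intervalIntegral.integral_sub (((hc _).const_mul _).sub (hc _)) ((hc _).const_mul _)]
    refine intervalIntegral.integral_congr fun θ _ => ?_
    have h2 := sub_two_mul_sqrt_mul_cos_pos hl θ
    have h3 := treeDensity_add_mul_treeDensity hQ d θ
    field_simp
    linear_combination Real.sin θ * h3
  have hpi := Real.pi_pos
  rw [h0, if_neg (Nat.succ_ne_zero d)] at h1
  simp only [treeResolvent]
  linear_combination -(2 / Real.pi) * h1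

theorem abs_treeResolvent_le {Q : ℕ} (hQ : 2 ≤ Q) {l : ℝ} (hl : 2 * √(Q : ℝ) < l) (d : ℕ) :
    |treeResolvent Q l d| ≤ 4 * (l - 2 * √(Q : ℝ))⁻¹ * (√(Q : ℝ))⁻¹ ^ d := by
  have h1 := Complex.norm_real (treeResolvent Q l d)
  rw [Real.norm_eq_abs] at h1
  rw [← h1, ← treeKernel_inv]
  refine norm_treeKernel_le hQ (fun θ => ?_) d
  have : (Q : ℂ) + 1 ≠ 0 := by exact_mod_cast (Nat.succ_ne_zero Q)
  have h : (l : ℂ) - (Q + 1) * (1 - treeSpectral Q θ) =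
      ((l - 2 * √(Q : ℝ) * Real.cos θ : ℝ) : ℂ) := by
    rw [treeSpectral]
    push_cast
    field_simp
    ring
  have h2 := sub_two_mul_sqrt_mul_cos_pos hl θ
  rw [h, norm_inv, Complex.norm_real, Real.norm_of_nonneg h2.le]
  have h3 := Real.cos_le_one θ
  have h4 : 0 ≤ 2 * √(Q : ℝ) := by positivity
  exact inv_anti₀ (sub_pos.2 hl) (by nlinarith)

theorem two_mul_sqrt_lt_add_div {Q : ℕ} {r : ℝ} (hr : √(Q : ℝ) < r) :
    2 * √(Q : ℝ) < r + Q / r := by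
  have hr0 : 0 < r := (Real.sqrt_nonneg _).trans_lt hr
  have hbb : √(Q : ℝ) ^ 2 = Q := Real.sq_sqrt (by positivity)
  have : r + Q / r - 2 * √(Q : ℝ) = (r - √(Q : ℝ)) ^ 2 / r := by
    field_simp
    rw [sub_sq, hbb]
    ring
  have h : 0 < (r - √(Q : ℝ)) ^ 2 / r := by
    have := sub_pos.2 hr
    positivity
  linarith

theorem treeResolvent_eq {Q : ℕ} (hQ : 2 ≤ Q) {r : ℝ} (hr : √(Q : ℝ) < r) (d : ℕ) :
    treeResolvent Q (r + Q / r) d = (r - r⁻¹)⁻¹ * r⁻¹ ^ d := by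
  have hl := two_mul_sqrt_lt_add_div hr
  have hQ' : (2 : ℝ) ≤ Q := by exact_mod_cast hQ
  have hb : 0 < √(Q : ℝ) := Real.sqrt_pos.2 (by linarith)
  have hbb : √(Q : ℝ) ^ 2 = Q := Real.sq_sqrt (by linarith)
  have h1 : (1 : ℝ) < √(Q : ℝ) := Real.lt_sqrt_of_sq_lt (by linarith)
  have hr0 : 0 < r := hb.trans hr
  set s := treeResolvent Q (r + Q / r) with hs
  have hrec : ∀ d, (s (d + 1) - s d / r) = (r / Q) ^ d * (s 1 - s 0 / r) := by
    intro d
    induction d with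
    | zero => simp
    | succ d ih =>
      rw [pow_succ', mul_assoc, ← ih]
      have := mul_treeResolvent_succ hQ hl d
      rw [← hs] at this
      field_simp at this ⊢
      linear_combination -this
  set c := 4 * (r + Q / r - 2 * √(Q : ℝ))⁻¹ with hc
  have hc0 : 0 < c := by
    have := sub_pos.2 hl
    positivity
  have hbound : ∀ d, |s 1 - s 0 / r| ≤ 2 * c * (√(Q : ℝ) / r) ^ d := by
    intro d
    have ha := abs_treeResolvent_le hQ hl d
    have hb' := abs_treeResolvent_le hQ hl (d + 1)
    rw [← hs, ← hc] at ha hb'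
    have h2 : |s (d + 1) - s d / r| ≤ 2 * c * (√(Q : ℝ))⁻¹ ^ d := by
      calc _ ≤ |s (d + 1)| + |s d / r| := abs_sub _ _
        _ ≤ c * (√(Q : ℝ))⁻¹ ^ d + c * (√(Q : ℝ))⁻¹ ^ d := by
          gcongr
          · refine hb'.trans ?_
            gcongr c * ?_
            exact pow_le_pow_of_le_one (by positivity) (inv_le_one_of_one_le₀ h1.le) (by omega)
          · rw [abs_div, abs_of_pos hr0]
            exact (div_le_self (abs_nonneg _) (h1.trans hr).le).trans ha
        _ = _ := by ring
    rw [hrec, abs_mul, abs_of_pos (by positivity)] at h2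
    have h3 : (r / Q) ^ d * (√(Q : ℝ) / r) ^ d = (√(Q : ℝ))⁻¹ ^ d := by
      rw [← mul_pow]
      congr 1
      field_simp
      exact hbb
    rw [← h3] at h2
    have h4 : 0 < (r / Q) ^ d := by positivity
    refine le_of_mul_le_mul_left ?_ h4
    linarith
  have hzero : s 1 - s 0 / r = 0 := by
    rw [← abs_nonpos_iff]
    have ht : Filter.Tendsto (fun d : ℕ => 2 * c * (√(Q : ℝ) / r) ^ d) Filter.atTop
        (nhds (2 * c * 0)) :=
      (tendsto_pow_atTop_nhds_zero_of_lt_one (by positivity) ((div_lt_one hr0).2 hr)).const_mul _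
    rw [mul_zero] at ht
    exact ge_of_tendsto' ht hbound
  have hstep : ∀ d, s (d + 1) = s d / r := by
    intro d
    have := hrec d
    rw [hzero, mul_zero] at this
    linarith
  have hr1 : r - r⁻¹ ≠ 0 := by
    have : r⁻¹ < 1 := inv_lt_one_of_one_lt₀ (h1.trans hr)
    linarith
  induction d with
  | zero =>
    have h0 := mul_treeResolvent_zero hQ hl
    rw [← hs, hstep 0] at h0
    rw [pow_zero, mul_one]
    refine eq_inv_of_mul_eq_one_left ?_
    field_simp at h0 ⊢
    linear_combination h0
  | succ d ih =>
    rw [hstep, ih, pow_succ]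
    ring

theorem ENNReal.tsum_tsum_inv_pow_dist_mul_sq_le {V : Type*} {G : SimpleGraph V}
    [∀ v, Fintype (G.neighborSet v)] (L : lp (fun _ : V => ℂ) 2 →L[ℂ] lp (fun _ : V => ℂ) 2)
    {Q : ℕ} (hQ : 2 ≤ Q) (hG : G.IsTree) (hdeg : ∀ v : V, G.degree v = Q + 1)
    (hL : ∀ (f : lp (fun _ : V => ℂ) 2) (x : V),
      L f x = f x - ((Q : ℂ) + 1)⁻¹ * (∑ y ∈ G.neighborFinset x, f y))
    (hsa : IsSelfAdjoint L) {r : ℝ} (hr : √(Q : ℝ) < r) :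
    ∃ C : ℝ, 0 < C ∧ ∀ h : V → ℝ≥0∞,
      ∑' x, (∑' y, ENNReal.ofReal (r⁻¹ ^ G.dist x y) * h y) ^ 2 ≤
        ENNReal.ofReal C * ∑' y, h y ^ 2 := by
  classical
  have hl := two_mul_sqrt_lt_add_div hr
  have hQ' : (2 : ℝ) ≤ Q := by exact_mod_cast hQ
  have h1 : (1 : ℝ) < √(Q : ℝ) := Real.lt_sqrt_of_sq_lt (by linarith)
  have hr0 : 0 < r := by linarith
  have hr1 : 0 < r - r⁻¹ := by
    have : r⁻¹ < 1 := inv_lt_one_of_one_lt₀ (h1.trans hr)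
    linarith
  set F : ℂ → ℂ := fun z => ((r + Q / r : ℝ) - (Q + 1) * (1 - z))⁻¹ with hFdef
  have hF : ContinuousOn (fun s : ℝ => F s)
      (Set.Icc (1 - 2 * √(Q : ℝ) / (Q + 1)) (1 + 2 * √(Q : ℝ) / (Q + 1))) := by
    refine ContinuousOn.inv₀ (by fun_prop) fun s hs => ?_
    have h2 : (Q + 1) * (1 - s) ≤ 2 * √(Q : ℝ) := by
      have := hs.1
      have h3 : 1 - s ≤ 2 * √(Q : ℝ) / (Q + 1) := by linarith
      rw [le_div_iff₀ (by positivity)] at h3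
      linarith
    have h4 : (r + Q / r) - (Q + 1) * (1 - s) ≠ 0 := by linarith
    exact_mod_cast h4
  have hker := fun x y => cfc_apply_single_eq_treeKernel L hQ hG hdeg hL hsa hF x y
  simp only [hFdef, treeKernel_inv, treeResolvent_eq hQ hr] at hker
  rw [← hFdef] at hker
  set S := cfc F L
  refine ⟨((r - r⁻¹) * ‖S‖ + 1) ^ 2, by positivity, fun h => ?_⟩
  by_cases htop : ∑' y, h y ^ 2 = ⊤
  · rw [htop, ENNReal.mul_top (by simpa using by positivity)]
    exact le_top
  have hfin : ∀ y, h y ≠ ⊤ := fun y hy => by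
    have := ENNReal.ne_top_of_tsum_ne_top htop y
    simp [hy] at this
  have hsum : Summable fun y => (h y).toReal ^ 2 := by
    have := ENNReal.summable_toReal htop
    simpa using this
  have hmem : Memℓp (fun y => (((h y).toReal : ℝ) : ℂ)) 2 := by
    refine memℓp_gen ?_
    simpa using hsum
  set f : lp (fun _ : V => ℂ) 2 := ⟨_, hmem⟩
  have hfv : ∀ y, f y = (((h y).toReal : ℝ) : ℂ) := fun y => rfl
  have hSf : ∀ x, (∑' y, ENNReal.ofReal (r⁻¹ ^ G.dist x y) * h y) =
      ENNReal.ofReal ((r - r⁻¹) * ‖S f x‖) := by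
    intro x
    have h5 := lp.hasSum_apply_single S f x
    simp only [hfv, hker] at h5
    have h6 : HasSum (fun y => (h y).toReal * ((r - r⁻¹)⁻¹ * r⁻¹ ^ G.dist x y)) (S f x).re := by
      have h7 := Complex.hasSum_re h5
      simpa only [← Complex.ofReal_mul, Complex.ofReal_re] using h7
    have h8 : S f x = ((S f x).re : ℂ) := by
      refine h5.unique ?_
      have h7 := Complex.hasSum_ofReal.2 h6
      simpa only [Complex.ofReal_mul] using h7
    have h9 : 0 ≤ (S f x).re := h6.nonneg fun y => by positivity
    rw [h8, Complex.norm_real, Real.norm_of_nonneg h9, ← (h6.mul_left (r - r⁻¹)).tsum_eq,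
      ENNReal.ofReal_tsum_of_nonneg (fun y => by positivity) (h6.mul_left (r - r⁻¹)).summable]
    refine tsum_congr fun y => ?_
    have h10 : (r - r⁻¹) * ((h y).toReal * ((r - r⁻¹)⁻¹ * r⁻¹ ^ G.dist x y)) =
        r⁻¹ ^ G.dist x y * (h y).toReal := by
      rw [mul_left_comm, mul_inv_cancel_left₀ hr1.ne', mul_comm]
    rw [h10, ENNReal.ofReal_mul (by positivity), ENNReal.ofReal_toReal (hfin y)]
  have hnorm : ∀ g : lp (fun _ : V => ℂ) 2,
      HasSum (fun x => ‖g x‖ ^ 2) (‖g‖ ^ 2) := fun g => by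
    simpa using lp.hasSum_norm (p := 2) (by simp) g
  have hf2 : ∑' y, h y ^ 2 = ENNReal.ofReal (‖f‖ ^ 2) := by
    rw [← (hnorm f).tsum_eq, ENNReal.ofReal_tsum_of_nonneg (fun y => by positivity)
      (hnorm f).summable]
    refine tsum_congr fun y => ?_
    rw [hfv, Complex.norm_real, Real.norm_of_nonneg ENNReal.toReal_nonneg,
      ENNReal.ofReal_pow ENNReal.toReal_nonneg, ENNReal.ofReal_toReal (hfin y)]
  have hsq := (hnorm (S f)).mul_left ((r - r⁻¹) ^ 2)
  simp only [hSf, ← ENNReal.ofReal_pow (mul_nonneg hr1.le (norm_nonneg _)), mul_pow]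
  rw [← ENNReal.ofReal_tsum_of_nonneg (fun y => by positivity) hsq.summable, hsq.tsum_eq, hf2,
    ← ENNReal.ofReal_mul (by positivity), ← mul_pow, ← mul_pow]
  refine ENNReal.ofReal_le_ofReal (pow_le_pow_left₀ (by positivity) ?_ 2)
  have h11 := S.le_opNorm f
  have h12 := norm_nonneg f
  nlinarith

theorem integral_inv_sin_sq_le {δ : ℝ} (h0 : 0 < δ) (h1 : δ ≤ Real.pi / 2) :
    ∫ θ in δ..(Real.pi - δ), (Real.sin θ ^ 2)⁻¹ ≤ 2 * (Real.sin δ)⁻¹ := by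
  have hpi := Real.pi_pos
  have hle : δ ≤ Real.pi - δ := by linarith
  have hsin : ∀ θ ∈ Set.uIcc δ (Real.pi - δ), 0 < Real.sin θ := by
    intro θ hθ
    rw [Set.uIcc_of_le hle] at hθ
    exact Real.sin_pos_of_pos_of_lt_pi (by linarith [hθ.1]) (by linarith [hθ.2])
  have hder : ∀ θ ∈ Set.uIcc δ (Real.pi - δ),
      HasDerivAt (fun θ => -(Real.cos θ / Real.sin θ)) ((Real.sin θ ^ 2)⁻¹) θ := by
    intro θ hθ
    have h := ((Real.hasDerivAt_cos θ).div (Real.hasDerivAt_sin θ) (hsin θ hθ).ne').neg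
    refine h.congr_deriv ?_
    have := (hsin θ hθ).ne'
    field_simp
    linear_combination Real.sin_sq_add_cos_sq θ
  have hcont : ContinuousOn (fun θ => (Real.sin θ ^ 2)⁻¹) (Set.uIcc δ (Real.pi - δ)) :=
    ContinuousOn.inv₀ (by fun_prop) fun θ hθ => (pow_pos (hsin θ hθ) 2).ne'
  rw [intervalIntegral.integral_eq_sub_of_hasDerivAt hder hcont.intervalIntegrable,
    Real.cos_pi_sub, Real.sin_pi_sub]
  have hs := hsin δ Set.left_mem_uIcc
  have hc := Real.cos_le_one δ
  have : Real.cos δ / Real.sin δ ≤ (Real.sin δ)⁻¹ := by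
    rw [div_eq_mul_inv]
    exact mul_le_of_le_one_left (by positivity) hc
  rw [neg_div]
  linarith

section

variable {ψ ψ' g g' : ℝ → ℝ} {k k' k'' : ℝ → ℂ} {B M t : ℝ}

theorem hasDerivAt_exp_phase (hψ : ∀ θ, HasDerivAt ψ (ψ' θ) θ) (ht : t ≠ 0) (θ : ℝ) :
    HasDerivAt (fun θ => (Complex.I * t)⁻¹ * Complex.exp (Complex.I * t * ψ θ))
      (Complex.exp (Complex.I * t * ψ θ) * ψ' θ) θ := by
  have h1 := (((hψ θ).ofReal_comp.const_mul (Complex.I * (t : ℂ))).cexp).const_mul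
    (Complex.I * (t : ℂ))⁻¹
  refine h1.congr_deriv ?_
  have : (t : ℂ) ≠ 0 := by exact_mod_cast ht
  field_simp

theorem norm_exp_phase (t x : ℝ) : ‖Complex.exp (Complex.I * t * x)‖ = 1 := by
  have := Complex.norm_exp_ofReal_mul_I (t * x)
  push_cast at this
  rw [← this]
  congr 2
  ring

theorem norm_inv_I_mul_exp_phase (t x : ℝ) :
    ‖(Complex.I * t)⁻¹ * Complex.exp (Complex.I * t * x)‖ = |t|⁻¹ := by
  rw [norm_mul, norm_exp_phase, norm_inv, norm_mul, Complex.norm_I, Complex.norm_real]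
  simp

theorem norm_integral_exp_phase_mul_middle_le (hψ : ∀ θ, HasDerivAt ψ (ψ' θ) θ)
    (hψc : Continuous ψ') (hg : ∀ θ, HasDerivAt g (g' θ) θ) (hgc : Continuous g')
    (hψg : ∀ θ, ψ' θ * g θ = Real.sin θ) (hk' : ∀ θ, HasDerivAt k' (k'' θ) θ)
    (hk''c : Continuous k'') (hgB : ∀ θ ∈ Set.Icc 0 Real.pi, |g θ| ≤ B)
    (hg'B : ∀ θ ∈ Set.Icc 0 Real.pi, |g' θ| ≤ B)
    (hk'M : ∀ θ ∈ Set.Icc 0 Real.pi, ‖k' θ‖ ≤ M)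
    (hk''M : ∀ θ ∈ Set.Icc 0 Real.pi, ‖k'' θ‖ ≤ M) (ht : t ≠ 0) {δ : ℝ} (h0 : 0 < δ)
    (h1 : δ ≤ Real.pi / 2) :
    ‖∫ θ in δ..(Real.pi - δ), Complex.exp (Complex.I * t * ψ θ) * k' θ‖ ≤
      |t|⁻¹ * (8 * (M * B) * (Real.sin δ)⁻¹) := by
  have hpi := Real.pi_pos
  have hle : δ ≤ Real.pi - δ := by linarith
  have hsub : Set.uIcc δ (Real.pi - δ) ⊆ Set.Icc 0 Real.pi := by
    rw [Set.uIcc_of_le hle]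
    exact Set.Icc_subset_Icc h0.le (by linarith)
  have hsin : ∀ θ ∈ Set.uIcc δ (Real.pi - δ), 0 < Real.sin θ := by
    intro θ hθ
    rw [Set.uIcc_of_le hle] at hθ
    exact Real.sin_pos_of_pos_of_lt_pi (by linarith [hθ.1]) (by linarith [hθ.2])
  have hM : 0 ≤ M := (norm_nonneg _).trans (hk'M 0 ⟨le_rfl, hpi.le⟩)
  have hB : 0 ≤ B := (abs_nonneg _).trans (hgB 0 ⟨le_rfl, hpi.le⟩)
  have hψcont : Continuous ψ := continuous_iff_continuousAt.2 fun θ => (hψ θ).continuousAt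
  have hgcont : Continuous g := continuous_iff_continuousAt.2 fun θ => (hg θ).continuousAt
  have hk'cont : Continuous k' := continuous_iff_continuousAt.2 fun θ => (hk' θ).continuousAt
  set v : ℝ → ℂ := fun θ => k' θ * g θ / Real.sin θ with hv
  set v' : ℝ → ℂ := fun θ => ((k'' θ * g θ + k' θ * g' θ) * Real.sin θ -
    k' θ * g θ * Real.cos θ) / (Real.sin θ : ℂ) ^ 2 with hv'
  have hsin' : ∀ θ ∈ Set.uIcc δ (Real.pi - δ), (Real.sin θ : ℂ) ≠ 0 := fun θ hθ => by
    exact_mod_cast (hsin θ hθ).ne'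
  have hvd : ∀ θ ∈ Set.uIcc δ (Real.pi - δ), HasDerivAt v (v' θ) θ := fun θ hθ =>
    ((hk' θ).mul (hg θ).ofReal_comp).div (Real.hasDerivAt_sin θ).ofReal_comp (hsin' θ hθ)
  have hv'c : ContinuousOn v' (Set.uIcc δ (Real.pi - δ)) :=
    ContinuousOn.div (Continuous.continuousOn (by fun_prop)) (by fun_prop)
      fun θ hθ => pow_ne_zero 2 (hsin' θ hθ)
  have hu'c : Continuous fun θ => Complex.exp (Complex.I * t * ψ θ) * ψ' θ := by fun_prop
  have hvb : ∀ θ ∈ Set.uIcc δ (Real.pi - δ), ‖v θ‖ ≤ M * B * (Real.sin θ)⁻¹ := by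
    intro θ hθ
    rw [hv, norm_div, norm_mul, Complex.norm_real, Complex.norm_real,
      Real.norm_of_nonneg (hsin θ hθ).le, div_eq_mul_inv]
    have := hsin θ hθ
    gcongr
    · exact hk'M θ (hsub hθ)
    · exact hgB θ (hsub hθ)
  have hv'b : ∀ θ ∈ Set.uIcc δ (Real.pi - δ), ‖v' θ‖ ≤ 3 * (M * B) * (Real.sin θ ^ 2)⁻¹ := by
    intro θ hθ
    rw [hv', norm_div, norm_pow, Complex.norm_real, Real.norm_of_nonneg (hsin θ hθ).le,
      div_eq_mul_inv]
    have h2 : ‖k'' θ * g θ‖ ≤ M * B := by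
      rw [norm_mul, Complex.norm_real]
      exact mul_le_mul (hk''M θ (hsub hθ)) (hgB θ (hsub hθ)) (norm_nonneg _) hM
    have h3 : ‖k' θ * g' θ‖ ≤ M * B := by
      rw [norm_mul, Complex.norm_real]
      exact mul_le_mul (hk'M θ (hsub hθ)) (hg'B θ (hsub hθ)) (norm_nonneg _) hM
    have h4 : ‖k' θ * g θ‖ ≤ M * B := by
      rw [norm_mul, Complex.norm_real]
      exact mul_le_mul (hk'M θ (hsub hθ)) (hgB θ (hsub hθ)) (norm_nonneg _) hM
    have h5 : ‖(Real.sin θ : ℂ)‖ ≤ 1 := by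
      rw [Complex.norm_real]
      exact Real.abs_sin_le_one θ
    have h6 : ‖(Real.cos θ : ℂ)‖ ≤ 1 := by
      rw [Complex.norm_real]
      exact Real.abs_cos_le_one θ
    gcongr
    calc _ ≤ ‖(k'' θ * g θ + k' θ * g' θ) * Real.sin θ‖ + ‖k' θ * g θ * Real.cos θ‖ :=
          norm_sub_le _ _
      _ ≤ (M * B + M * B) * 1 + (M * B) * 1 := by
        rw [norm_mul _ (Real.sin θ : ℂ), norm_mul _ (Real.cos θ : ℂ)]
        gcongr
        exact (norm_add_le _ _).trans (add_le_add h2 h3)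
      _ = _ := by ring
  have hibp := intervalIntegral.integral_mul_deriv_eq_deriv_mul
    hvd (fun θ _ => hasDerivAt_exp_phase hψ ht θ)
    hv'c.intervalIntegrable (hu'c.intervalIntegrable _ _)
  have heq : ∫ θ in δ..(Real.pi - δ), Complex.exp (Complex.I * t * ψ θ) * k' θ =
      ∫ θ in δ..(Real.pi - δ), v θ * (Complex.exp (Complex.I * t * ψ θ) * ψ' θ) := by
    refine intervalIntegral.integral_congr fun θ hθ => ?_
    have h2 : (ψ' θ : ℂ) * g θ = Real.sin θ := by exact_mod_cast hψg θ
    have h3 := hsin' θ hθ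
    simp only [hv]
    field_simp
    rw [← h2]
    ring
  have hs := hsin δ Set.left_mem_uIcc
  have hend1 := hvb δ Set.left_mem_uIcc
  have hend2 := hvb (Real.pi - δ) Set.right_mem_uIcc
  rw [Real.sin_pi_sub] at hend2
  have hint : ‖∫ θ in δ..(Real.pi - δ), v' θ *
      ((Complex.I * t)⁻¹ * Complex.exp (Complex.I * t * ψ θ))‖ ≤
      6 * (M * B) * (Real.sin δ)⁻¹ * |t|⁻¹ := by
    have hcont : ContinuousOn (fun θ => 3 * (M * B) * (Real.sin θ ^ 2)⁻¹ * |t|⁻¹)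
        (Set.uIcc δ (Real.pi - δ)) :=
      ((ContinuousOn.inv₀ (by fun_prop) fun θ hθ => (pow_pos (hsin θ hθ) 2).ne').const_mul
        _).mul_const _
    refine (intervalIntegral.norm_integral_le_of_norm_le hle (g := fun θ =>
      3 * (M * B) * (Real.sin θ ^ 2)⁻¹ * |t|⁻¹) ?_ hcont.intervalIntegrable).trans ?_
    · refine Filter.Eventually.of_forall fun θ hθ => ?_
      rw [norm_mul, norm_inv_I_mul_exp_phase]
      gcongr
      exact hv'b θ (by rw [Set.uIcc_of_le hle]; exact Set.Ioc_subset_Icc_self hθ)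
    · rw [intervalIntegral.integral_mul_const, intervalIntegral.integral_const_mul]
      have h2 := mul_le_mul_of_nonneg_left (integral_inv_sin_sq_le h0 h1)
        (by positivity : 0 ≤ 3 * (M * B) * |t|⁻¹)
      linarith
  rw [heq, hibp]
  calc _ ≤ M * B * (Real.sin δ)⁻¹ * |t|⁻¹ + M * B * (Real.sin δ)⁻¹ * |t|⁻¹ +
        6 * (M * B) * (Real.sin δ)⁻¹ * |t|⁻¹ := by
        refine (norm_sub_le _ _).trans (add_le_add ((norm_sub_le _ _).trans
          (add_le_add ?_ ?_)) hint)
        · rw [norm_mul, norm_inv_I_mul_exp_phase]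
          gcongr
        · rw [norm_mul, norm_inv_I_mul_exp_phase]
          gcongr
    _ = _ := by ring

theorem norm_integral_exp_phase_mul_le (hψ : ∀ θ, HasDerivAt ψ (ψ' θ) θ)
    (hψc : Continuous ψ') (hg : ∀ θ, HasDerivAt g (g' θ) θ) (hgc : Continuous g')
    (hψg : ∀ θ, ψ' θ * g θ = Real.sin θ) (hk' : ∀ θ, HasDerivAt k' (k'' θ) θ)
    (hk''c : Continuous k'') (hgB : ∀ θ ∈ Set.Icc 0 Real.pi, |g θ| ≤ B)
    (hg'B : ∀ θ ∈ Set.Icc 0 Real.pi, |g' θ| ≤ B)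
    (hk'M : ∀ θ ∈ Set.Icc 0 Real.pi, ‖k' θ‖ ≤ M)
    (hk''M : ∀ θ ∈ Set.Icc 0 Real.pi, ‖k'' θ‖ ≤ M) (ht : 1 ≤ |t|) :
    ‖∫ θ in (0 : ℝ)..Real.pi, Complex.exp (Complex.I * t * ψ θ) * k' θ‖ ≤
      (2 + 4 * Real.pi * B) * M * |t| ^ (-(1 / 2) : ℝ) := by
  have hpi := Real.pi_pos
  have hpi3 := Real.pi_gt_three
  have ht0 : 0 < |t| := by linarith
  have htne : t ≠ 0 := abs_pos.1 ht0
  set δ : ℝ := |t| ^ (-(1 / 2) : ℝ) with hδ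
  have h0 : 0 < δ := by positivity
  have h1 : δ ≤ 1 := Real.rpow_le_one_of_one_le_of_nonpos ht (by norm_num)
  have hδ2 : |t|⁻¹ = δ * δ := by
    rw [hδ, ← Real.rpow_add ht0, ← Real.rpow_neg_one]
    norm_num
  have hM : 0 ≤ M := (norm_nonneg _).trans (hk'M 0 ⟨le_rfl, hpi.le⟩)
  have hB : 0 ≤ B := (abs_nonneg _).trans (hgB 0 ⟨le_rfl, hpi.le⟩)
  have hψcont : Continuous ψ := continuous_iff_continuousAt.2 fun θ => (hψ θ).continuousAt
  have hk'cont : Continuous k' := continuous_iff_continuousAt.2 fun θ => (hk' θ).continuousAt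
  have hc : Continuous fun θ => Complex.exp (Complex.I * t * ψ θ) * k' θ := by fun_prop
  have hii := fun a b => hc.intervalIntegrable (μ := volume) a b
  have hnorm : ∀ θ ∈ Set.Icc 0 Real.pi, ‖Complex.exp (Complex.I * t * ψ θ) * k' θ‖ ≤ M := by
    intro θ hθ
    rw [norm_mul, norm_exp_phase, one_mul]
    exact hk'M θ hθ
  have hA : ‖∫ θ in (0 : ℝ)..δ, Complex.exp (Complex.I * t * ψ θ) * k' θ‖ ≤ M * δ := by
    have := intervalIntegral.norm_integral_le_of_norm_le_const (a := 0) (b := δ) (C := M)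
      (f := fun θ => Complex.exp (Complex.I * t * ψ θ) * k' θ) fun θ hθ => by
        rw [Set.uIoc_of_le h0.le] at hθ
        exact hnorm θ ⟨hθ.1.le, by linarith [hθ.2]⟩
    rwa [sub_zero, abs_of_pos h0] at this
  have hC : ‖∫ θ in (Real.pi - δ)..Real.pi, Complex.exp (Complex.I * t * ψ θ) * k' θ‖ ≤
      M * δ := by
    have := intervalIntegral.norm_integral_le_of_norm_le_const (a := Real.pi - δ)
      (b := Real.pi) (C := M)
      (f := fun θ => Complex.exp (Complex.I * t * ψ θ) * k' θ) fun θ hθ => by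
        rw [Set.uIoc_of_le (by linarith)] at hθ
        exact hnorm θ ⟨by linarith [hθ.1], hθ.2⟩
    rwa [sub_sub_cancel, abs_of_pos h0] at this
  have hmid := norm_integral_exp_phase_mul_middle_le hψ hψc hg hgc hψg hk' hk''c hgB hg'B hk'M
    hk''M htne h0 (by linarith : δ ≤ Real.pi / 2)
  have hsin : 2 / Real.pi * δ ≤ Real.sin δ := Real.mul_le_sin h0.le (by linarith)
  have hsinv : (Real.sin δ)⁻¹ ≤ Real.pi / 2 * δ⁻¹ := by
    have := inv_anti₀ (by positivity) hsin
    rwa [mul_inv, inv_div] at this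
  rw [← intervalIntegral.integral_add_adjacent_intervals (hii 0 (Real.pi - δ)) (hii _ _),
    ← intervalIntegral.integral_add_adjacent_intervals (hii 0 δ) (hii _ _)]
  calc _ ≤ M * δ + |t|⁻¹ * (8 * (M * B) * (Real.sin δ)⁻¹) + M * δ :=
        (norm_add_le _ _).trans (add_le_add ((norm_add_le _ _).trans (add_le_add hA hmid)) hC)
    _ ≤ M * δ + |t|⁻¹ * (8 * (M * B) * (Real.pi / 2 * δ⁻¹)) + M * δ := by gcongr
    _ = _ := by
      rw [hδ2]
      field_simp
      ring

theorem norm_integral_exp_phase_mul_deriv_mul_le (hψ : ∀ θ, HasDerivAt ψ (ψ' θ) θ)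
    (hψc : Continuous ψ') (hg : ∀ θ, HasDerivAt g (g' θ) θ) (hgc : Continuous g')
    (hψg : ∀ θ, ψ' θ * g θ = Real.sin θ) (hk : ∀ θ, HasDerivAt k (k' θ) θ)
    (hk' : ∀ θ, HasDerivAt k' (k'' θ) θ)
    (hk''c : Continuous k'') (hgB : ∀ θ ∈ Set.Icc 0 Real.pi, |g θ| ≤ B)
    (hg'B : ∀ θ ∈ Set.Icc 0 Real.pi, |g' θ| ≤ B)
    (hk'M : ∀ θ ∈ Set.Icc 0 Real.pi, ‖k' θ‖ ≤ M)
    (hk''M : ∀ θ ∈ Set.Icc 0 Real.pi, ‖k'' θ‖ ≤ M) (hk0 : k 0 = 0) (hkpi : k Real.pi = 0)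
    (ht : 1 ≤ |t|) :
    ‖∫ θ in (0 : ℝ)..Real.pi, k θ * (Complex.exp (Complex.I * t * ψ θ) * ψ' θ)‖ ≤
      (2 + 4 * Real.pi * B) * M * |t| ^ (-(3 / 2) : ℝ) := by
  have ht0 : 0 < |t| := by linarith
  have htne : t ≠ 0 := abs_pos.1 ht0
  have hψcont : Continuous ψ := continuous_iff_continuousAt.2 fun θ => (hψ θ).continuousAt
  have hk'cont : Continuous k' := continuous_iff_continuousAt.2 fun θ => (hk' θ).continuousAt
  have hu'c : Continuous fun θ => Complex.exp (Complex.I * t * ψ θ) * ψ' θ := by fun_prop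
  rw [intervalIntegral.integral_mul_deriv_eq_deriv_mul
    (fun θ _ => hk θ) (fun θ _ => hasDerivAt_exp_phase hψ htne θ)
    (hk'cont.intervalIntegrable _ _) (hu'c.intervalIntegrable _ _), hk0, hkpi]
  have h := norm_integral_exp_phase_mul_le hψ hψc hg hgc hψg hk' hk''c hgB hg'B hk'M hk''M ht
  have heq : ∫ θ in (0 : ℝ)..Real.pi,
      k' θ * ((Complex.I * t)⁻¹ * Complex.exp (Complex.I * t * ψ θ)) =
      (Complex.I * t)⁻¹ *
        ∫ θ in (0 : ℝ)..Real.pi, Complex.exp (Complex.I * t * ψ θ) * k' θ := by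
    rw [← intervalIntegral.integral_const_mul]
    refine intervalIntegral.integral_congr fun θ _ => ?_
    ring
  have hpow : |t| ^ (-(3 / 2) : ℝ) = |t|⁻¹ * |t| ^ (-(1 / 2) : ℝ) := by
    rw [← Real.rpow_neg_one, ← Real.rpow_add ht0]
    norm_num
  rw [zero_mul, zero_mul, sub_zero, zero_sub, norm_neg, heq, norm_mul, norm_inv, norm_mul,
    Complex.norm_I, Complex.norm_real, one_mul, hpow, Real.norm_eq_abs]
  calc _ ≤ |t|⁻¹ * ((2 + 4 * Real.pi * B) * M * |t| ^ (-(1 / 2) : ℝ)) := by gcongr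
    _ = _ := by ring

end

theorem treeSpectral_pos {Q : ℕ} (hQ : 2 ≤ Q) (θ : ℝ) : 0 < treeSpectral Q θ := by
  linarith [(treeSpectral_mem Q θ).1, two_mul_sqrt_div_lt_one hQ]

theorem contDiff_treeSpectral (Q : ℕ) {n : ℕ∞} : ContDiff ℝ n (treeSpectral Q) := by
  unfold treeSpectral
  exact contDiff_const.sub (contDiff_const.mul Real.contDiff_cos)

theorem hasDerivAt_treeSpectral (Q : ℕ) (θ : ℝ) :
    HasDerivAt (treeSpectral Q) (2 * √(Q : ℝ) / (Q + 1) * Real.sin θ) θ := by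
  have h := ((Real.hasDerivAt_cos θ).const_mul (2 * √(Q : ℝ) / (Q + 1))).const_sub 1
  refine h.congr_deriv ?_
  ring

/-- The quotient of `sin` by the derivative of the phase `θ ↦ (treeSpectral Q θ) ^ (α / 2)`. -/
noncomputable def treeAmplitude (Q : ℕ) (α θ : ℝ) : ℝ :=
  (α / 2 * (2 * √(Q : ℝ) / (Q + 1)))⁻¹ * treeSpectral Q θ ^ (1 - α / 2)

theorem contDiff_treeAmplitude {Q : ℕ} (hQ : 2 ≤ Q) (α : ℝ) {n : ℕ∞} :
    ContDiff ℝ n (treeAmplitude Q α) :=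
  contDiff_const.mul
    ((contDiff_treeSpectral Q).rpow_const_of_ne fun θ => (treeSpectral_pos hQ θ).ne')

/-- The derivative of the phase `θ ↦ (treeSpectral Q θ) ^ (α / 2)`. -/
noncomputable def treePhaseDeriv (Q : ℕ) (α θ : ℝ) : ℝ :=
  2 * √(Q : ℝ) / (Q + 1) * Real.sin θ * (α / 2) * treeSpectral Q θ ^ (α / 2 - 1)

theorem hasDerivAt_treeSpectral_rpow {Q : ℕ} (hQ : 2 ≤ Q) (α θ : ℝ) :
    HasDerivAt (fun θ => treeSpectral Q θ ^ (α / 2)) (treePhaseDeriv Q α θ) θ :=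
  (hasDerivAt_treeSpectral Q θ).rpow_const (Or.inl (treeSpectral_pos hQ θ).ne')

theorem continuous_treePhaseDeriv {Q : ℕ} (hQ : 2 ≤ Q) (α : ℝ) :
    Continuous (treePhaseDeriv Q α) := by
  have h := (continuous_treeSpectral Q).rpow_const (p := α / 2 - 1)
    fun θ => Or.inl (treeSpectral_pos hQ θ).ne'
  unfold treePhaseDeriv
  fun_prop

theorem treePhaseDeriv_mul_treeAmplitude {Q : ℕ} (hQ : 2 ≤ Q) {α : ℝ} (hα : 0 < α) (θ : ℝ) :
    treePhaseDeriv Q α θ * treeAmplitude Q α θ = Real.sin θ := by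
  have h0 := treeSpectral_pos hQ θ
  have h : treeSpectral Q θ ^ (α / 2 - 1) * treeSpectral Q θ ^ (1 - α / 2) = 1 := by
    rw [← Real.rpow_add h0]
    simp
  have hQ' : (2 : ℝ) ≤ Q := by exact_mod_cast hQ
  have hb : 0 < √(Q : ℝ) := Real.sqrt_pos.2 (by linarith)
  rw [treePhaseDeriv, treeAmplitude]
  have h2 : α / 2 * (2 * √(Q : ℝ) / (Q + 1)) ≠ 0 := by positivity
  calc _ = (α / 2 * (2 * √(Q : ℝ) / (Q + 1))) * (α / 2 * (2 * √(Q : ℝ) / (Q + 1)))⁻¹ *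
        (treeSpectral Q θ ^ (α / 2 - 1) * treeSpectral Q θ ^ (1 - α / 2)) * Real.sin θ := by ring
    _ = _ := by rw [h, mul_inv_cancel₀ h2, one_mul, one_mul]

theorem exists_norm_deriv_exp_mul_le {W : ℝ → ℂ} (hW : ContDiff ℝ 2 W) :
    ∃ B, 0 ≤ B ∧ ∀ n : ℕ, ∃ Z' Z'' : ℝ → ℂ,
      (∀ θ, HasDerivAt (fun θ : ℝ => Complex.exp ((n : ℝ) * θ * Complex.I) * W θ) (Z' θ) θ) ∧
      (∀ θ, HasDerivAt Z' (Z'' θ) θ) ∧ Continuous Z'' ∧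
      (∀ θ ∈ Set.Icc 0 Real.pi, ‖Z' θ‖ ≤ (n + 1) ^ 2 * B) ∧
      (∀ θ ∈ Set.Icc 0 Real.pi, ‖Z'' θ‖ ≤ (n + 1) ^ 2 * B) := by
  have hW1 : ContDiff ℝ 1 (deriv W) := (contDiff_succ_iff_deriv (n := 1).1 hW).2.2
  have hW2 : Continuous (deriv (deriv W)) := hW1.continuous_deriv le_rfl
  have hd0 : ∀ θ, HasDerivAt W (deriv W θ) θ := fun θ =>
    (hW.differentiable (by norm_num) θ).hasDerivAt
  have hd1 : ∀ θ, HasDerivAt (deriv W) (deriv (deriv W) θ) θ := fun θ =>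
    (hW1.differentiable (by norm_num) θ).hasDerivAt
  obtain ⟨B0, h0⟩ := isCompact_Icc.exists_bound_of_continuousOn
    (s := Set.Icc 0 Real.pi) hW.continuous.continuousOn
  obtain ⟨B1, h1⟩ := isCompact_Icc.exists_bound_of_continuousOn
    (s := Set.Icc 0 Real.pi) hW1.continuous.continuousOn
  obtain ⟨B2, h2⟩ := isCompact_Icc.exists_bound_of_continuousOn
    (s := Set.Icc 0 Real.pi) hW2.continuousOn
  set B := max (max B0 B1) B2 with hB
  have hpi := Real.pi_pos
  have hb0 : ∀ θ ∈ Set.Icc 0 Real.pi, ‖W θ‖ ≤ B := fun θ hθ =>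
    (h0 θ hθ).trans ((le_max_left _ _).trans (le_max_left _ _))
  have hb1 : ∀ θ ∈ Set.Icc 0 Real.pi, ‖deriv W θ‖ ≤ B := fun θ hθ =>
    (h1 θ hθ).trans ((le_max_right _ _).trans (le_max_left _ _))
  have hb2 : ∀ θ ∈ Set.Icc 0 Real.pi, ‖deriv (deriv W) θ‖ ≤ B := fun θ hθ =>
    (h2 θ hθ).trans (le_max_right _ _)
  have hB0 : 0 ≤ B := (norm_nonneg _).trans (hb0 0 ⟨le_rfl, hpi.le⟩)
  refine ⟨B, hB0, fun n => ?_⟩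
  have hexp : ∀ θ : ℝ, HasDerivAt (fun θ : ℝ => Complex.exp ((n : ℝ) * θ * Complex.I))
      (Complex.exp ((n : ℝ) * θ * Complex.I) * (n * Complex.I)) θ := by
    intro θ
    have := ((((hasDerivAt_id θ).ofReal_comp).const_mul ((n : ℝ) : ℂ)).mul_const Complex.I).cexp
    refine this.congr_deriv ?_
    simp
  have hnexp : ∀ θ : ℝ, ‖Complex.exp ((n : ℝ) * θ * Complex.I)‖ = 1 := by
    intro θ
    have := Complex.norm_exp_ofReal_mul_I (n * θ)
    push_cast at this ⊢
    exact this
  refine ⟨fun θ => Complex.exp ((n : ℝ) * θ * Complex.I) * (n * Complex.I * W θ + deriv W θ),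
    fun θ => Complex.exp ((n : ℝ) * θ * Complex.I) *
      ((n * Complex.I) ^ 2 * W θ + 2 * (n * Complex.I) * deriv W θ + deriv (deriv W) θ),
    fun θ => ?_, fun θ => ?_, ?_, fun θ hθ => ?_, fun θ hθ => ?_⟩
  · refine ((hexp θ).mul (hd0 θ)).congr_deriv ?_
    ring
  · refine ((hexp θ).mul (((hd0 θ).const_mul (n * Complex.I)).add (hd1 θ))).congr_deriv ?_
    simp only [Pi.add_apply]
    ring
  · have := hW.continuous
    have := hW1.continuous
    fun_prop
  · rw [norm_mul, hnexp, one_mul]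
    calc _ ≤ ‖n * Complex.I * W θ‖ + ‖deriv W θ‖ := norm_add_le _ _
      _ ≤ n * B + B := by
        rw [norm_mul, norm_mul, Complex.norm_I, mul_one, Complex.norm_natCast]
        gcongr
        exacts [hb0 θ hθ, hb1 θ hθ]
      _ ≤ _ := by nlinarith [mul_nonneg (Nat.cast_nonneg (α := ℝ) n) hB0,
          mul_nonneg (sq_nonneg (n : ℝ)) hB0]
  · rw [norm_mul, hnexp, one_mul]
    calc _ ≤ ‖(n * Complex.I) ^ 2 * W θ‖ + ‖2 * (n * Complex.I) * deriv W θ‖ +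
          ‖deriv (deriv W) θ‖ := norm_add₃_le
      _ ≤ n ^ 2 * B + 2 * n * B + B := by
        rw [norm_mul, norm_mul, norm_mul, norm_pow, norm_mul, Complex.norm_I, mul_one,
          Complex.norm_natCast, Complex.norm_ofNat]
        gcongr
        exacts [hb0 θ hθ, hb1 θ hθ, hb2 θ hθ]
      _ = _ := by ring

theorem treeKernel_exp_eq {Q : ℕ} (hQ : 2 ≤ Q) {α : ℝ} (hα : 0 < α) (t : ℝ) (d : ℕ) :
    treeKernel Q (fun z => Complex.exp (Complex.I * t * z ^ (α / 2 : ℂ))) d =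
      (2 / Real.pi * (√(Q : ℝ))⁻¹ ^ d : ℝ) * ∫ θ in (0 : ℝ)..Real.pi,
        ((treeAmplitude Q α θ * treeWave Q d θ : ℝ) : ℂ) *
          (Complex.exp (Complex.I * t * (treeSpectral Q θ ^ (α / 2) : ℝ)) *
            treePhaseDeriv Q α θ) := by
  rw [treeKernel, Complex.ofReal_mul, mul_assoc,
    ← intervalIntegral.integral_const_mul (((√(Q : ℝ))⁻¹ ^ d : ℝ) : ℂ)]
  congr 1
  refine intervalIntegral.integral_congr fun θ _ => ?_
  rw [← treePhaseDeriv_mul_treeAmplitude hQ hα θ, Complex.ofReal_cpow (treeSpectral_pos hQ θ).le,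
    treeDensity]
  push_cast
  ring

theorem norm_exp_I_mul_cpow {x : ℝ} (hx : 0 ≤ x) (t a : ℝ) :
    ‖Complex.exp (Complex.I * t * (x : ℂ) ^ (a / 2 : ℂ))‖ = 1 := by
  have h := norm_exp_phase t (x ^ (a / 2))
  rw [Complex.ofReal_cpow hx] at h
  push_cast at h
  exact h

theorem exists_norm_treeKernel_exp_le {Q : ℕ} (hQ : 2 ≤ Q) {α : ℝ} (hα : 0 < α) :
    ∃ C : ℝ, 0 < C ∧ ∀ (t : ℝ) (d : ℕ),
      ‖treeKernel Q (fun z => Complex.exp (Complex.I * t * z ^ (α / 2 : ℂ))) d‖ ≤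
        C * (1 + |t|) ^ (-(3 / 2) : ℝ) * ((d + 2) ^ 2 * (√(Q : ℝ))⁻¹ ^ d) := by
  have hg := contDiff_treeAmplitude hQ α (n := 2)
  have hgc : Continuous (deriv (treeAmplitude Q α)) := hg.continuous_deriv (by norm_num)
  obtain ⟨b0, hb0⟩ := isCompact_Icc.exists_bound_of_continuousOn
    (s := Set.Icc 0 Real.pi) hg.continuous.continuousOn
  obtain ⟨b1, hb1⟩ := isCompact_Icc.exists_bound_of_continuousOn
    (s := Set.Icc 0 Real.pi) hgc.continuousOn
  have hW : ContDiff ℝ 2 fun θ => (treeAmplitude Q α θ : ℂ) * treeFactor Q θ :=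
    (Complex.ofRealCLM.contDiff.comp hg).mul (contDiff_treeFactor hQ (n := 2))
  obtain ⟨M, hM0, hM⟩ := exists_norm_deriv_exp_mul_le hW
  have hpi := Real.pi_pos
  set B := max b0 b1
  have hB0 : 0 ≤ B := (norm_nonneg _).trans ((hb0 0 ⟨le_rfl, hpi.le⟩).trans (le_max_left _ _))
  refine ⟨16 + 2 / Real.pi * ((2 + 4 * Real.pi * B) * M) * 4, by positivity, fun t d => ?_⟩
  have ht1 : 0 < 1 + |t| := by positivity
  have hpow : (1 / 4 : ℝ) ≤ 2 ^ (-(3 / 2) : ℝ) := by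
    have h4 : (1 / 4 : ℝ) = 2 ^ (-2 : ℝ) := by
      rw [Real.rpow_neg (by norm_num)]
      norm_num
    rw [h4]
    exact Real.rpow_le_rpow_of_exponent_le (by norm_num) (by norm_num)
  rcases le_total |t| 1 with ht | ht
  · refine (norm_treeKernel_le hQ (c := 1)
      (fun θ => (norm_exp_I_mul_cpow (treeSpectral_pos hQ θ).le t α).le) d).trans ?_
    have h1 : (1 / 4 : ℝ) ≤ (1 + |t|) ^ (-(3 / 2) : ℝ) :=
      hpow.trans (Real.rpow_le_rpow_of_nonpos ht1 (by linarith) (by norm_num))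
    calc (4 * 1 * (√(Q : ℝ))⁻¹ ^ d : ℝ) = 16 * (1 / 4) * (1 * (√(Q : ℝ))⁻¹ ^ d) := by ring
      _ ≤ _ := by
        gcongr
        · exact le_add_of_nonneg_right (by positivity)
        · nlinarith [Nat.cast_nonneg (α := ℝ) d]
  · obtain ⟨Z', Z'', hZ', hZ'', hZc, hZ'M, hZ''M⟩ := hM (d + 1)
    have him : ∀ {f : ℝ → ℂ} {f' : ℂ} {θ : ℝ}, HasDerivAt f f' θ →
        HasDerivAt (fun θ => (((f θ).im : ℝ) : ℂ)) ((f'.im : ℝ) : ℂ) θ := fun {f f' θ} h =>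
      (Complex.imCLM.hasFDerivAt.comp_hasDerivAt θ h).ofReal_comp
    have hk : ∀ θ, ((treeAmplitude Q α θ * treeWave Q d θ : ℝ) : ℂ) =
        (((Complex.exp (((d + 1 : ℕ) : ℝ) * θ * Complex.I) *
          ((treeAmplitude Q α θ : ℂ) * treeFactor Q θ)).im : ℝ) : ℂ) := by
      intro θ
      rw [mul_left_comm, Complex.im_ofReal_mul, treeWave]
    have hmain := norm_integral_exp_phase_mul_deriv_mul_le
      (k := fun θ => ((treeAmplitude Q α θ * treeWave Q d θ : ℝ) : ℂ))
      (k' := fun θ => (((Z' θ).im : ℝ) : ℂ)) (k'' := fun θ => (((Z'' θ).im : ℝ) : ℂ))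
      (B := B) (M := ((d + 1 : ℕ) + 1) ^ 2 * M) (t := t)
      (fun θ => hasDerivAt_treeSpectral_rpow hQ α θ) (continuous_treePhaseDeriv hQ α)
      (fun θ => (hg.differentiable (by norm_num) θ).hasDerivAt) hgc
      (treePhaseDeriv_mul_treeAmplitude hQ hα)
      (fun θ => by simpa only [hk] using him (hZ' θ))
      (fun θ => him (hZ'' θ)) (by fun_prop)
      (fun θ hθ => (hb0 θ hθ).trans (le_max_left _ _))
      (fun θ hθ => (hb1 θ hθ).trans (le_max_right _ _))
      (fun θ hθ => by
        rw [Complex.norm_real]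
        exact (Complex.abs_im_le_norm _).trans (hZ'M θ hθ))
      (fun θ hθ => by
        rw [Complex.norm_real]
        exact (Complex.abs_im_le_norm _).trans (hZ''M θ hθ))
      (by simp [treeWave_zero]) (by simp [treeWave_pi]) ht
    have htp : |t| ^ (-(3 / 2) : ℝ) ≤ 4 * (1 + |t|) ^ (-(3 / 2) : ℝ) := by
      have h2 : (2 * |t|) ^ (-(3 / 2) : ℝ) ≤ (1 + |t|) ^ (-(3 / 2) : ℝ) :=
        Real.rpow_le_rpow_of_nonpos ht1 (by linarith) (by norm_num)
      rw [Real.mul_rpow (by norm_num) (by positivity)] at h2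
      have h3 : 0 ≤ |t| ^ (-(3 / 2) : ℝ) := by positivity
      nlinarith
    rw [treeKernel_exp_eq hQ hα, norm_mul, Complex.norm_real, Real.norm_of_nonneg (by positivity)]
    calc _ ≤ 2 / Real.pi * (√(Q : ℝ))⁻¹ ^ d * ((2 + 4 * Real.pi * B) *
          (((d + 1 : ℕ) + 1) ^ 2 * M) * (4 * (1 + |t|) ^ (-(3 / 2) : ℝ))) := by
          gcongr
          exact hmain.trans (by gcongr)
      _ = 2 / Real.pi * ((2 + 4 * Real.pi * B) * M) * 4 * (1 + |t|) ^ (-(3 / 2) : ℝ) *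
          ((d + 2) ^ 2 * (√(Q : ℝ))⁻¹ ^ d) := by
        push_cast
        ring
      _ ≤ _ := by
        gcongr
        exact le_add_of_nonneg_left (by norm_num)

theorem exists_sq_mul_pow_le {ρ : ℝ} (h0 : 0 ≤ ρ) (h1 : ρ < 1) :
    ∃ C : ℝ, 0 < C ∧ ∀ d : ℕ, ((d : ℝ) + 2) ^ 2 * ρ ^ d ≤ C := by
  obtain ⟨K, hK⟩ := (tendsto_pow_const_mul_const_pow_of_abs_lt_one 2
    (by rwa [abs_of_nonneg h0] : |ρ| < 1)).bddAbove_range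
  have hK' : ∀ d : ℕ, (d : ℝ) ^ 2 * ρ ^ d ≤ K := fun d => hK ⟨d, rfl⟩
  have hK0 : 0 ≤ K := by simpa using hK' 0
  refine ⟨2 * K + 8, by positivity, fun d => ?_⟩
  have h2 : ρ ^ d ≤ 1 := pow_le_one₀ h0 h1.le
  have h3 : 0 ≤ ρ ^ d := pow_nonneg h0 d
  nlinarith [hK' d, mul_nonneg (sq_nonneg ((d : ℝ) - 2)) h3]

theorem exists_sq_mul_inv_pow_le {b s : ℝ} (hb : 1 < b) (hs0 : 0 < s) (hs1 : s < 1) :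
    ∃ r, b < r ∧ ∃ C : ℝ, 0 < C ∧
      ∀ d : ℕ, ((d : ℝ) + 2) ^ 2 * b⁻¹ ^ d ≤ C * (r⁻¹ ^ d) ^ s := by
  have hb0 : 0 < b := by linarith
  have he : 1 < (1 + s⁻¹) / 2 := by linarith [(one_lt_inv₀ hs0).2 hs1]
  set r := b ^ ((1 + s⁻¹) / 2) with hr
  have hr0 : 0 < r := by positivity
  have hrs : r ^ s < b := by
    rw [hr, ← Real.rpow_mul hb0.le]
    have : (1 + s⁻¹) / 2 * s < 1 := by
      field_simp
      linarith
    simpa using Real.rpow_lt_rpow_of_exponent_lt hb this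
  have hrs0 : 0 < r ^ s := by positivity
  obtain ⟨C, hC0, hC⟩ := exists_sq_mul_pow_le (ρ := r ^ s / b) (by positivity)
    ((div_lt_one hb0).2 hrs)
  refine ⟨r, by simpa using Real.rpow_lt_rpow_of_exponent_lt hb he, C, hC0, fun d => ?_⟩
  have h1 : (r⁻¹ ^ d) ^ s = (r ^ s)⁻¹ ^ d := by
    rw [← Real.rpow_natCast, ← Real.rpow_natCast, ← Real.rpow_mul (by positivity), mul_comm,
      Real.rpow_mul (by positivity), Real.inv_rpow hr0.le]
  have h2 := hC d
  rw [h1]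
  rw [div_pow, mul_div_assoc', div_le_iff₀ (by positivity)] at h2
  rw [inv_pow, inv_pow, ← div_eq_mul_inv, ← div_eq_mul_inv, div_le_div_iff₀ (by positivity)
    (by positivity)]
  exact h2

theorem ENNReal.tsum_rpow_mul_rpow_le {ι : Type*} (f g : ι → ℝ≥0∞) {a b : ℝ} (ha : 0 ≤ a)
    (hb : 0 ≤ b) (hab : a + b = 1) :
    ∑' i, f i ^ a * g i ^ b ≤ (∑' i, f i) ^ a * (∑' i, g i) ^ b := by
  let _ : MeasurableSpace ι := ⊤
  have h := ENNReal.lintegral_mul_norm_pow_le (μ := Measure.count) (f := f) (g := g)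
    measurable_from_top.aemeasurable measurable_from_top.aemeasurable ha hb hab
  simpa only [lintegral_count] using h

/-- Complex interpolation between `ℓ¹ → ℓ^∞` and `ℓ² → ℓ²` for powers of a nonnegative kernel. -/
theorem ENNReal.tsum_tsum_rpow_mul_rpow_le {ι : Type*} {k : ι → ι → ℝ≥0∞} {C : ℝ≥0∞}
    (hk : ∀ h : ι → ℝ≥0∞, ∑' x, (∑' y, k x y * h y) ^ 2 ≤ C * ∑' y, h y ^ 2) {p : ℝ}
    (hp : 2 < p) (f : ι → ℝ≥0∞) :
    ∑' x, (∑' y, k x y ^ (2 / p) * f y) ^ p ≤ C * (∑' y, f y ^ (p / (p - 1))) ^ (p - 1) := by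
  have hp0 : 0 < p := by linarith
  have hp1 : 0 < p - 1 := by linarith
  have hs : 0 ≤ 1 - 2 / p := by
    rw [sub_nonneg, div_le_one hp0]
    exact hp.le
  have hs' : 0 ≤ 2 / p := by positivity
  set A := ∑' y, f y ^ (p / (p - 1)) with hA
  have hsplit : ∀ x y, k x y ^ (2 / p) * f y =
      (f y ^ (p / (p - 1))) ^ (1 - 2 / p) * (k x y * f y ^ (p / (p - 1) / 2)) ^ (2 / p) := by
    intro x y
    rw [ENNReal.mul_rpow_of_nonneg _ _ hs', mul_left_comm, ← ENNReal.rpow_mul, ← ENNReal.rpow_mul,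
      ← ENNReal.rpow_add_of_nonneg _ _ (by positivity) (by positivity)]
    have : p / (p - 1) * (1 - 2 / p) + p / (p - 1) / 2 * (2 / p) = 1 := by
      field_simp
      ring
    rw [this, ENNReal.rpow_one]
  have hx : ∀ x, (∑' y, k x y ^ (2 / p) * f y) ^ p ≤
      A ^ (p - 2) * (∑' y, k x y * f y ^ (p / (p - 1) / 2)) ^ 2 := by
    intro x
    have h := ENNReal.rpow_le_rpow (ENNReal.tsum_rpow_mul_rpow_le (fun y => f y ^ (p / (p - 1)))
      (fun y => k x y * f y ^ (p / (p - 1) / 2)) hs hs' (by ring)) hp0.le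
    simp only [← hsplit] at h
    refine h.trans_eq ?_
    rw [ENNReal.mul_rpow_of_nonneg _ _ hp0.le, ← ENNReal.rpow_mul, ← ENNReal.rpow_mul,
      div_mul_cancel₀ _ hp0.ne', ENNReal.rpow_two, sub_mul, div_mul_cancel₀ _ hp0.ne', one_mul]
  calc _ ≤ ∑' x, A ^ (p - 2) * (∑' y, k x y * f y ^ (p / (p - 1) / 2)) ^ 2 :=
        ENNReal.tsum_le_tsum hx
    _ ≤ A ^ (p - 2) * (C * ∑' y, (f y ^ (p / (p - 1) / 2)) ^ 2) := by
      rw [ENNReal.tsum_mul_left]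
      gcongr
      exact hk _
    _ = A ^ (p - 2) * (C * A) := by
      congr 3
      refine funext fun y => ?_
      rw [← ENNReal.rpow_two, ← ENNReal.rpow_mul, div_mul_cancel₀ _ two_ne_zero]
    _ = C * (A ^ (p - 2) * A ^ (1 : ℝ)) := by
      rw [ENNReal.rpow_one]
      ring
    _ = _ := by
      rw [← ENNReal.rpow_add_of_nonneg _ _ (by linarith) (by norm_num)]
      congr 2
      ring

theorem MeasureTheory.eLpNorm_count_eq_tsum {ι E : Type*} [MeasurableSpace ι]
    [MeasurableSingletonClass ι] [NormedAddCommGroup E] (f : ι → E) {p : ℝ≥0∞} (hp0 : p ≠ 0)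
    (hp : p ≠ ⊤) :
    eLpNorm f p Measure.count = (∑' x, ‖f x‖ₑ ^ p.toReal) ^ (1 / p.toReal) := by
  rw [eLpNorm_eq_lintegral_rpow_enorm_toReal hp0 hp, lintegral_count]

theorem MeasureTheory.eLpNorm_count_anti {ι E : Type*} [MeasurableSpace ι]
    [MeasurableSingletonClass ι] [NormedAddCommGroup E] (f : ι → E) {p q : ℝ≥0∞} (hp0 : p ≠ 0)
    (hpq : p ≤ q) : eLpNorm f q Measure.count ≤ eLpNorm f p Measure.count := by
  have hq0 : q ≠ 0 := ((pos_iff_ne_zero.2 hp0).trans_le hpq).ne'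
  have hle := fun x => enorm_le_eLpNorm_count f x hp0
  rcases eq_or_ne q ⊤ with rfl | hq
  · rw [eLpNorm_exponent_top, eLpNormEssSup_count]
    exact iSup_le hle
  have hp : p ≠ ⊤ := ne_top_of_le_ne_top hq hpq
  have hp' := ENNReal.toReal_pos hp0 hp
  have hq' := ENNReal.toReal_pos hq0 hq
  have hpq' := ENNReal.toReal_mono hq hpq
  set N := eLpNorm f p Measure.count with hN
  have hNp : ∑' x, ‖f x‖ₑ ^ p.toReal = N ^ p.toReal := by
    rw [hN, eLpNorm_count_eq_tsum f hp0 hp, ← ENNReal.rpow_mul, one_div_mul_cancel hp'.ne',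
      ENNReal.rpow_one]
  rw [eLpNorm_count_eq_tsum f hq0 hq, one_div, ENNReal.rpow_inv_le_iff hq']
  calc _ ≤ ∑' x, N ^ (q.toReal - p.toReal) * ‖f x‖ₑ ^ p.toReal := by
        refine ENNReal.tsum_le_tsum fun x => ?_
        have : ‖f x‖ₑ ^ q.toReal =
            ‖f x‖ₑ ^ (q.toReal - p.toReal) * ‖f x‖ₑ ^ p.toReal := by
          rw [← ENNReal.rpow_add_of_nonneg _ _ (by linarith) hp'.le, sub_add_cancel]
        rw [this]
        gcongr
        exact hle x
    _ = _ := by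
      rw [ENNReal.tsum_mul_left, hNp, ← ENNReal.rpow_add_of_nonneg _ _ (by linarith) hp'.le,
        sub_add_cancel]

theorem continuousOn_exp_I_mul_cpow (a : ℂ) (t : ℝ) {c d : ℝ} (hc : 0 < c) :
    ContinuousOn (fun s : ℝ => Complex.exp (Complex.I * t * (s : ℂ) ^ a)) (Set.Icc c d) := by
  intro s hs
  have h : ContinuousAt (fun s : ℝ => (s : ℂ) ^ a) s :=
    (continuousAt_cpow_const (Complex.ofReal_mem_slitPlane.2 (hc.trans_le hs.1))).comp
      Complex.continuous_ofReal.continuousAt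
  exact (h.const_mul _).cexp.continuousWithinAt

theorem lp.enorm_apply_le_tsum {V : Type*} [DecidableEq V]
    (A : lp (fun _ : V => ℂ) 2 →L[ℂ] lp (fun _ : V => ℂ) 2) (f : lp (fun _ : V => ℂ) 2) (x : V) :
    ‖A f x‖ₑ ≤ ∑' y, ‖A (lp.single 2 y 1) x‖ₑ * ‖f y‖ₑ := by
  rw [← (lp.hasSum_apply_single A f x).tsum_eq]
  refine enorm_tsum_le_tsum_enorm.trans_eq ?_
  simp only [enorm_mul, mul_comm]

/-- A kernel bounded by `c * k ^ (2 / p)`, where `k` is nonnegative and bounded on `ℓ²`, maps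
`ℓ^{p'}` to `ℓ^p` with norm at most `c * C ^ (1 / p)`. -/
theorem eLpNorm_count_le_of_enorm_le_tsum_rpow {V : Type*} [MeasurableSpace V]
    [MeasurableSingletonClass V] {k : V → V → ℝ≥0∞} {C c : ℝ≥0∞}
    (hk : ∀ h : V → ℝ≥0∞, ∑' x, (∑' y, k x y * h y) ^ 2 ≤ C * ∑' y, h y ^ 2) {p : ℝ} (hp : 2 < p)
    {f g : V → ℂ} (hg : ∀ x, ‖g x‖ₑ ≤ c * ∑' y, k x y ^ (2 / p) * ‖f y‖ₑ) :
    eLpNorm g (ENNReal.ofReal p) Measure.count ≤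
      c * C ^ (1 / p) * eLpNorm f (ENNReal.ofReal (p / (p - 1))) Measure.count := by
  have hp0 : 0 < p := by linarith
  have hp1 : 0 < p - 1 := by linarith
  rw [eLpNorm_count_eq_tsum _ (by simpa using hp0) ENNReal.ofReal_ne_top,
    eLpNorm_count_eq_tsum _ (by simpa using div_pos hp0 hp1) ENNReal.ofReal_ne_top,
    ENNReal.toReal_ofReal hp0.le, ENNReal.toReal_ofReal (div_pos hp0 hp1).le, one_div p,
    ENNReal.rpow_inv_le_iff hp0, ENNReal.mul_rpow_of_nonneg _ _ hp0.le,
    ENNReal.mul_rpow_of_nonneg _ _ hp0.le, ← ENNReal.rpow_mul, ← ENNReal.rpow_mul,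
    inv_mul_cancel₀ hp0.ne', ENNReal.rpow_one, one_div_div, div_mul_cancel₀ _ hp0.ne', mul_assoc]
  calc _ ≤ ∑' x, c ^ p * (∑' y, k x y ^ (2 / p) * ‖f y‖ₑ) ^ p := by
        refine ENNReal.tsum_le_tsum fun x => ?_
        rw [← ENNReal.mul_rpow_of_nonneg _ _ hp0.le]
        gcongr
        exact hg x
    _ ≤ _ := by
      rw [ENNReal.tsum_mul_left]
      gcongr
      exact ENNReal.tsum_tsum_rpow_mul_rpow_le hk hp _

theorem stmt18_dispersive_tree {V : Type*} [MeasurableSpace V] [DiscreteMeasurableSpace V]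
    (Q : ℕ) (hQ : 2 ≤ Q)
    -- T is a homogeneous tree of degree Q+1, with vertex set V
    (G : SimpleGraph V) [∀ v, Fintype (G.neighborSet v)]
    (htree : G.IsTree) (hdeg : ∀ v : V, G.degree v = Q + 1)
    -- the combinatorial Laplacian, a bounded self-adjoint operator on ℓ²(T)
    (Δ : lp (fun _ : V => ℂ) 2 →L[ℂ] lp (fun _ : V => ℂ) 2)
    (hΔ : ∀ (f : lp (fun _ : V => ℂ) 2) (x : V),
      Δ f x = ((Q : ℂ) + 1)⁻¹ * (∑ y ∈ G.neighborFinset x, f y) - f x)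
    (hsa : IsSelfAdjoint Δ)
    (α : ℝ) (hα0 : 0 < α) (hα2 : α ≤ 2)
    (q qt q' : ℝ≥0∞) (hq : 2 < q) (hqt : 2 < qt) (hq' : 1 / q + 1 / q' = 1) :
    ∃ C : ℝ, 0 < C ∧ ∀ t : ℝ, ∀ f : lp (fun _ : V => ℂ) 2,
      -- f lies in ℓ^{q′}(T) (and in ℓ²(T) since q′ ≤ 2)
      eLpNorm (fun x : V => f x) q' Measure.count < ⊤ →
      eLpNorm
          (fun x : V =>
            (cfc (fun z : ℂ => Complex.exp (Complex.I * t * z ^ (α / 2 : ℂ))) (-Δ)) f x)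
          qt Measure.count
        ≤ ENNReal.ofReal (C * (1 + |t|) ^ (-(3 / 2) : ℝ)) *
            eLpNorm (fun x : V => f x) q' Measure.count := by
  classical
  have hL : ∀ (f : lp (fun _ : V => ℂ) 2) (x : V),
      (-Δ) f x = f x - ((Q : ℂ) + 1)⁻¹ * (∑ y ∈ G.neighborFinset x, f y) := by
    intro f x
    change -(Δ f x) = _
    rw [hΔ]
    ring
  have hsaL : IsSelfAdjoint (-Δ) := hsa.neg
  obtain ⟨p, hp, hpq, hpqt⟩ : ∃ p : ℝ, 2 < p ∧ ENNReal.ofReal p ≤ q ∧ ENNReal.ofReal p ≤ qt := by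
    obtain ⟨r, hr, hrq⟩ := ENNReal.lt_iff_exists_nnreal_btwn.1 (lt_min hq hqt)
    refine ⟨r, by exact_mod_cast hr, ?_, ?_⟩ <;> rw [ENNReal.ofReal_coe_nnreal]
    · exact hrq.le.trans (min_le_left _ _)
    · exact hrq.le.trans (min_le_right _ _)
  have hp0 : 0 < p := by linarith
  have hp1 : 0 < p - 1 := by linarith
  have hpc : q' ≤ ENNReal.ofReal (p / (p - 1)) := by
    rw [one_div, one_div] at hq'
    have h1 : (ENNReal.ofReal p)⁻¹ + (ENNReal.ofReal (p / (p - 1)))⁻¹ = 1 := by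
      rw [← ENNReal.ofReal_inv_of_pos hp0, ← ENNReal.ofReal_inv_of_pos (div_pos hp0 hp1),
        ← ENNReal.ofReal_add (by positivity) (inv_nonneg.2 (div_pos hp0 hp1).le),
        ENNReal.ofReal_eq_one, inv_div]
      field_simp
      ring
    have h2 := ENNReal.inv_le_inv.2 hpq
    rw [← ENNReal.inv_le_inv, ENNReal.eq_sub_of_add_eq' ENNReal.one_ne_top ((add_comm _ _).trans h1),
      ENNReal.eq_sub_of_add_eq' ENNReal.one_ne_top ((add_comm _ _).trans hq')]
    exact tsub_le_tsub_left h2 _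
  have hq'0 : q' ≠ 0 := by
    rintro rfl
    simp at hq'
  have hb : 1 < √(Q : ℝ) := Real.lt_sqrt_of_sq_lt (by
    have : (2 : ℝ) ≤ Q := by exact_mod_cast hQ
    linarith)
  obtain ⟨r, hr, C₂, hC₂, hdecay⟩ := exists_sq_mul_inv_pow_le hb (s := 2 / p) (by positivity)
    ((div_lt_one hp0).2 hp)
  obtain ⟨C₀, hC₀, hresolvent⟩ :=
    ENNReal.tsum_tsum_inv_pow_dist_mul_sq_le (-Δ) hQ htree hdeg hL hsaL hr
  obtain ⟨C₁, hC₁, hkernel⟩ := exists_norm_treeKernel_exp_le hQ hα0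
  refine ⟨C₁ * C₂ * C₀ ^ (1 / p), by positivity, fun t f _ => ?_⟩
  have hr0 : 0 < r := by linarith
  have hker : ∀ x y, ‖cfc (fun z : ℂ => Complex.exp (Complex.I * t * z ^ (α / 2 : ℂ))) (-Δ)
      (lp.single 2 y 1) x‖ₑ ≤ ENNReal.ofReal (C₁ * C₂ * (1 + |t|) ^ (-(3 / 2) : ℝ)) *
        ENNReal.ofReal (r⁻¹ ^ G.dist x y) ^ (2 / p) := by
    intro x y
    rw [cfc_apply_single_eq_treeKernel (-Δ) hQ htree hdeg hL hsaL
      (continuousOn_exp_I_mul_cpow _ t (by linarith [two_mul_sqrt_div_lt_one hQ])) x y,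
      ENNReal.ofReal_rpow_of_nonneg (by positivity) (by positivity),
      ← ENNReal.ofReal_mul (by positivity), ← ofReal_norm]
    refine ENNReal.ofReal_le_ofReal ((hkernel t _).trans ?_)
    calc _ ≤ C₁ * (1 + |t|) ^ (-(3 / 2) : ℝ) * (C₂ * (r⁻¹ ^ G.dist x y) ^ (2 / p)) :=
          mul_le_mul_of_nonneg_left (hdecay _) (by positivity)
      _ = _ := by ring
  calc _ ≤ eLpNorm (fun x : V =>
        cfc (fun z : ℂ => Complex.exp (Complex.I * t * z ^ (α / 2 : ℂ))) (-Δ) f x)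
        (ENNReal.ofReal p) Measure.count := eLpNorm_count_anti _ (by simpa using hp0) hpqt
    _ ≤ ENNReal.ofReal (C₁ * C₂ * (1 + |t|) ^ (-(3 / 2) : ℝ)) * ENNReal.ofReal C₀ ^ (1 / p) *
        eLpNorm (fun x : V => f x) (ENNReal.ofReal (p / (p - 1))) Measure.count := by
      refine eLpNorm_count_le_of_enorm_le_tsum_rpow hresolvent hp fun x =>
        (lp.enorm_apply_le_tsum _ f x).trans ?_
      rw [← ENNReal.tsum_mul_left]
      refine ENNReal.tsum_le_tsum fun y => ?_
      rw [← mul_assoc]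
      gcongr
      exact hker x y
    _ = ENNReal.ofReal (C₁ * C₂ * C₀ ^ (1 / p) * (1 + |t|) ^ (-(3 / 2) : ℝ)) *
        eLpNorm (fun x : V => f x) (ENNReal.ofReal (p / (p - 1))) Measure.count := by
      rw [ENNReal.ofReal_rpow_of_pos hC₀, ← ENNReal.ofReal_mul (by positivity)]
      congr 2
      ring
    _ ≤ _ := by
      gcongr
      exact eLpNorm_count_anti _ hq'0 hpc
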